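/- Let P_1, ..., P_n be n-dimensional lattice polytopes in R^n. Then the number of interior lattice points of the Minkowski sum P_1 + ... + P_n is at least MV(P_1,...,P_n) - 1. (Soprunov's lower bound theorem.) -/

import Mathlib

open scoped Pointwise
open MeasureTheory Finset

def IsLatticePt {n : ℕ} (x : Fin n → ℝ) : Prop := ∀ i, ∃ z : ℤ, x i = (z : ℝ)

def IsLatticePolytope {n : ℕ} (P : Set (Fin n → ℝ)) : Prop :=
  ∃ V : Finset (Fin n → ℝ), V.Nonempty ∧ (∀ v ∈ V, IsLatticePt v) ∧
    P = convexHull ℝ (V : Set (Fin n → ℝ))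

noncomputable def adim {n : ℕ} (A : Set (Fin n → ℝ)) : ℕ :=
  Module.finrank ℝ (affineSpan ℝ A).direction

def relintLat {n : ℕ} (A : Set (Fin n → ℝ)) : Set (Fin n → ℝ) :=
  {x ∈ intrinsicInterior ℝ A | IsLatticePt x}

def intLat {n : ℕ} (A : Set (Fin n → ℝ)) : Set (Fin n → ℝ) :=
  {x ∈ interior A | IsLatticePt x}

noncomputable def mixedVol {n m : ℕ} (P : Fin m → Set (Fin n → ℝ)) : ℝ :=
  ∑ I : Finset (Fin m), (-1 : ℝ) ^ (m - I.card) * (volume (∑ i ∈ I, P i)).toReal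

namespace Sop
open Filter Topology
open scoped Classical
set_option linter.unusedSectionVars false

/-- A family of affine functions on `E`, indexed by colours `ι` and labels `X`. -/
structure Arr (E : Type*) [AddCommGroup E] [Module ℝ E] (ι X : Type*) where
  a : ι → X → (E →ₗ[ℝ] ℝ)
  ω : ι → X → ℝ

section Engine
variable {E : Type*} [NormedAddCommGroup E] [InnerProductSpace ℝ E] [FiniteDimensional ℝ E]
variable {ι X : Type*} [Fintype ι] [Fintype X]

def Arr.l (A : Arr E ι X) (i : ι) (x : X) (y : E) : ℝ := A.a i x y + A.ω i x

def Arr.Act (A : Arr E ι X) (i : ι) (x : X) (y : E) : Prop := ∀ w, A.l i w y ≤ A.l i x y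

def Gen (A : Arr E ι X) (W : Submodule ℝ E) (J : Finset ι) (y : E) : Prop :=
  ∀ μ : ι → X → ℝ, (∀ i, ∑ x, μ i x = 0) → (∀ i x, μ i x ≠ 0 → i ∈ J ∧ A.Act i x y) →
    (∀ u ∈ W, ∑ i, ∑ x, μ i x * A.a i x u = 0) → μ = 0

def Reg (A : Arr E ι X) (J : Finset ι) (D : Set E) (v : ι → X) : Set E :=
  {y | y ∈ D ∧ ∀ i ∈ J, A.Act i (v i) y}

def Pt (A : Arr E ι X) (J : Finset ι) (D : Set E) : Set E :=
  {y | y ∈ D ∧ ∀ i ∈ J, ∃ x x', x ≠ x' ∧ A.Act i x y ∧ A.Act i x' y}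

lemma Arr.l_add_smul (A : Arr E ι X) (i : ι) (x : X) (y u : E) (t : ℝ) :
    A.l i x (y + t • u) = A.l i x y + t * A.a i x u := by
  simp [Arr.l]; ring

lemma Arr.l_add (A : Arr E ι X) (i : ι) (x : X) (y u : E) :
    A.l i x (y + u) = A.l i x y + A.a i x u := by
  simp [Arr.l]; ring

lemma Arr.l_sub (A : Arr E ι X) (i : ι) (x : X) (y y' : E) :
    A.a i x (y' - y) = A.l i x y' - A.l i x y := by
  simp [Arr.l]

lemma Arr.l_cont (A : Arr E ι X) (i : ι) (x : X) : Continuous (A.l i x) := by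
  unfold Arr.l
  exact (LinearMap.continuous_of_finiteDimensional (A.a i x)).add continuous_const

lemma Arr.exists_act [Nonempty X] (A : Arr E ι X) (i : ι) (y : E) : ∃ x, A.Act i x y := by
  obtain ⟨x, hx⟩ := Finite.exists_max (fun x => A.l i x y)
  exact ⟨x, hx⟩

lemma Arr.act_eq (A : Arr E ι X) {i : ι} {x x' : X} {y : E} (h : A.Act i x y) (h' : A.Act i x' y) :
    A.l i x y = A.l i x' y := le_antisymm (h' x) (h x')

lemma Arr.act_closed (A : Arr E ι X) (i : ι) (x : X) : IsClosed {y | A.Act i x y} := by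
  have : {y | A.Act i x y} = ⋂ w, {y | A.l i w y ≤ A.l i x y} := by
    ext y; simp [Arr.Act]
  rw [this]
  exact isClosed_iInter fun w => isClosed_le (A.l_cont i w) (A.l_cont i x)

/-- ray form of convexity -/
lemma Arr.act_seg (A : Arr E ι X) {i : ι} {x : X} {y y' : E} (h : A.Act i x y) (h' : A.Act i x y')
    {t : ℝ} (h0 : 0 ≤ t) (h1 : t ≤ 1) : A.Act i x (y + t • (y' - y)) := by
  intro w
  rw [A.l_add_smul, A.l_add_smul, A.l_sub, A.l_sub]
  have := h w
  have := h' w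
  nlinarith

lemma Arr.act_convex (A : Arr E ι X) (i : ι) (x : X) : Convex ℝ {y | A.Act i x y} := by
  rw [convex_iff_forall_pos]
  intro y hy y' hy' a b ha hb hab
  have := A.act_seg hy hy' (t := b) hb.le (by linarith)
  have e : a • y + b • y' = y + b • (y' - y) := by
    rw [← eq_sub_iff_add_eq] at hab
    rw [hab]; module
  rw [e]; exact this

lemma Arr.act_persist (A : Arr E ι X) {i : ι} {x : X} {p u : E} (h : A.Act i x p)
    (hu : ∀ x', A.Act i x' p → A.a i x' u ≤ A.a i x u) :
    ∀ᶠ t in 𝓝[>] (0:ℝ), A.Act i x (p + t • u) := by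
  unfold Arr.Act
  rw [eventually_all]
  intro w
  by_cases hw : A.Act i w p
  · filter_upwards [self_mem_nhdsWithin] with t ht
    rw [A.l_add_smul, A.l_add_smul, A.act_eq hw h]
    have := mul_le_mul_of_nonneg_left (hu w hw) (le_of_lt ht)
    linarith
  · have hlt : A.l i w p < A.l i x p := by
      by_contra hge
      push Not at hge
      exact hw fun w' => (h w').trans hge
    have hc : ∀ z, Continuous fun t : ℝ => A.l i z (p + t • u) := fun z =>
      (A.l_cont i z).comp (by fun_prop)
    have : ∀ᶠ t in 𝓝 (0:ℝ), A.l i w (p + t • u) < A.l i x (p + t • u) :=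
      (hc w).continuousAt.eventually_lt (hc x).continuousAt (by simpa using hlt)
    exact (this.filter_mono nhdsWithin_le_nhds).mono fun t ht => ht.le

lemma Gen.mono {A : Arr E ι X} {W : Submodule ℝ E} {J J' : Finset ι} {y : E}
    (h : Gen A W J y) (hJ : J' ⊆ J) : Gen A W J' y := by
  intro μ h1 h2 h3
  exact h μ h1 (fun i x hx => ⟨hJ (h2 i x hx).1, (h2 i x hx).2⟩) h3

lemma Gen.primal {A : Arr E ι X} {W : Submodule ℝ E} {J : Finset ι} {y : E}
    (h : Gen A W J y) (τ : ι → X → ℝ) :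
    ∃ u ∈ W, ∃ s : ι → ℝ, ∀ i ∈ J, ∀ x, A.Act i x y → A.a i x u = τ i x + s i := by
  let T : (W × (ι → ℝ) × (ι × X → ℝ)) →ₗ[ℝ] (ι × X → ℝ) :=
    { toFun := fun us q => if q.1 ∈ J ∧ A.Act q.1 q.2 y then A.a q.1 q.2 us.1 - us.2.1 q.1
        else us.2.2 q
      map_add' := by
        intro x z; ext q; simp only [Prod.fst_add, Prod.snd_add, Submodule.coe_add, map_add,
          Pi.add_apply]
        split_ifs <;> ring
      map_smul' := by
        intro x z; ext q; simp only [Prod.smul_fst, Prod.smul_snd, Submodule.coe_smul, map_smul,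
          Pi.smul_apply, smul_eq_mul, RingHom.id_apply]
        split_ifs <;> ring }
  have hT : LinearMap.range T = ⊤ := by
    by_contra hne
    obtain ⟨f, hf, hle⟩ := Submodule.exists_le_ker_of_lt_top _ (lt_top_iff_ne_top.2 hne)
    have hfT : ∀ us, f (T us) = 0 := fun us => hle ⟨us, rfl⟩
    let μ : ι → X → ℝ := fun i x => f (Pi.single (i, x) 1)
    have key : ∀ g : ι × X → ℝ, f g = ∑ i, ∑ x, μ i x * g (i, x) := by
      intro g
      rw [LinearMap.pi_apply_eq_sum_univ f g, Fintype.sum_prod_type]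
      refine Finset.sum_congr rfl fun i _ => Finset.sum_congr rfl fun x _ => ?_
      rw [smul_eq_mul, mul_comm]
      congr 2
      ext j; simp [Pi.single_apply, eq_comm]
    have hsupp : ∀ i x, μ i x ≠ 0 → i ∈ J ∧ A.Act i x y := by
      intro i x hx
      by_contra hc
      apply hx
      have := hfT (0, 0, Pi.single (i, x) 1)
      rw [← this]
      show f _ = f _
      congr 1
      ext q
      by_cases hq : q = (i, x)
      · subst hq; simp [T, hc]
      · simp [T, Pi.single_apply, hq]
    have hμ : μ = 0 := by
      apply h μ
      · intro i
        have := hfT (0, - Pi.single i 1, 0)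
        rw [key] at this
        rw [← this, Finset.sum_eq_single i]
        · refine Finset.sum_congr rfl fun x _ => ?_
          by_cases hx : μ i x = 0
          · simp [hx]
          · simp [T, hsupp i x hx]
        · intro j _ hj
          refine Finset.sum_eq_zero fun x _ => ?_
          simp [T, Pi.single_apply, hj]
        · simp
      · exact hsupp
      · intro u hu
        have := hfT (⟨u, hu⟩, 0, 0)
        rw [key] at this
        rw [← this]
        refine Finset.sum_congr rfl fun i _ => Finset.sum_congr rfl fun x _ => ?_
        by_cases hx : μ i x = 0
        · simp [hx]
        · simp [T, hsupp i x hx]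
    apply hf
    ext g
    simp [key, hμ]
  obtain ⟨⟨u, s, r⟩, hu⟩ := LinearMap.range_eq_top.1 hT (fun q => τ q.1 q.2)
  refine ⟨u, u.2, s, fun i hi x hx => ?_⟩
  have := congrFun hu (i, x)
  simp [T, hi, hx] at this
  linarith

/-- `Gen` from solvability. -/
lemma gen_of_primal {A : Arr E ι X} {W : Submodule ℝ E} {J : Finset ι} {y : E}
    (h : ∀ τ : ι → X → ℝ, ∃ u ∈ W, ∃ s : ι → ℝ, ∀ i ∈ J, ∀ x, A.Act i x y → A.a i x u = τ i x + s i) :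
    Gen A W J y := by
  intro μ h1 h2 h3
  obtain ⟨u, hu, s, hs⟩ := h μ
  have h4 : ∑ i, ∑ x, μ i x * A.a i x u = ∑ i, ∑ x, μ i x * μ i x := by
    refine Finset.sum_congr rfl fun i _ => ?_
    have : ∑ x, μ i x * A.a i x u = ∑ x, (μ i x * μ i x + μ i x * s i) := by
      refine Finset.sum_congr rfl fun x _ => ?_
      by_cases hx : μ i x = 0
      · simp [hx]
      · rw [hs i (h2 i x hx).1 x (h2 i x hx).2]; ring
    rw [this, Finset.sum_add_distrib, ← Finset.sum_mul, h1]; simp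
  rw [h3 u hu] at h4
  have h5 : ∀ i, 0 ≤ ∑ x, μ i x * μ i x := fun i => Finset.sum_nonneg fun x _ => mul_self_nonneg _
  ext i x
  have h6 := (Finset.sum_eq_zero_iff_of_nonneg (fun i _ => h5 i)).1 h4.symm i (mem_univ _)
  have h7 := (Finset.sum_eq_zero_iff_of_nonneg (fun x _ => mul_self_nonneg _)).1 h6 x (mem_univ _)
  simpa using h7

/-- Surjectivity of the pair-difference map. -/
lemma Gen.surj {A : Arr E ι X} {W : Submodule ℝ E} {J : Finset ι} {y : E}
    (h : Gen A W J y) {p q : ι → X} (hpq : ∀ i ∈ J, p i ≠ q i ∧ A.Act i (p i) y ∧ A.Act i (q i) y)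
    (τ : ι → ℝ) : ∃ u ∈ W, ∀ i ∈ J, A.a i (p i) u - A.a i (q i) u = τ i := by
  obtain ⟨u, hu, s, hs⟩ := h.primal (fun i x => if x = p i then τ i else 0)
  refine ⟨u, hu, fun i hi => ?_⟩
  obtain ⟨h1, h2, h3⟩ := hpq i hi
  rw [hs i hi _ h2, hs i hi _ h3]
  simp [h1.symm]

def dmap (A : Arr E ι X) (W : Submodule ℝ E) (J : Finset ι) (p q : ι → X) : W →ₗ[ℝ] (J → ℝ) :=
  LinearMap.pi fun i => (A.a i (p i) - A.a i (q i)) ∘ₗ W.subtype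

lemma Gen.dmap_surj {A : Arr E ι X} {W : Submodule ℝ E} {J : Finset ι} {y : E}
    (h : Gen A W J y) {p q : ι → X} (hpq : ∀ i ∈ J, p i ≠ q i ∧ A.Act i (p i) y ∧ A.Act i (q i) y) :
    Function.Surjective (dmap A W J p q) := by
  intro τ
  obtain ⟨u, hu, hh⟩ := h.surj hpq (fun i => if hi : i ∈ J then τ ⟨i, hi⟩ else 0)
  refine ⟨⟨u, hu⟩, ?_⟩
  ext ⟨i, hi⟩
  have := hh i hi
  simpa [dmap, hi] using this

lemma Gen.card_le {A : Arr E ι X} {W : Submodule ℝ E} {J : Finset ι} {y : E}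
    (h : Gen A W J y) {p q : ι → X} (hpq : ∀ i ∈ J, p i ≠ q i ∧ A.Act i (p i) y ∧ A.Act i (q i) y) :
    J.card ≤ Module.finrank ℝ W := by
  have := LinearMap.finrank_le_finrank_of_surjective (h.dmap_surj hpq)
  simpa using this

lemma Gen.inj {A : Arr E ι X} {W : Submodule ℝ E} {J : Finset ι} {y : E}
    (h : Gen A W J y) (hJ : J.card = Module.finrank ℝ W) {p q : ι → X}
    (hpq : ∀ i ∈ J, p i ≠ q i ∧ A.Act i (p i) y ∧ A.Act i (q i) y) {u : E} (hu : u ∈ W)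
    (h0 : ∀ i ∈ J, A.a i (p i) u = A.a i (q i) u) : u = 0 := by
  have hi : Function.Injective (dmap A W J p q) := by
    rw [LinearMap.injective_iff_surjective_of_finrank_eq_finrank (by simp [hJ])]
    exact h.dmap_surj hpq
  have : dmap A W J p q ⟨u, hu⟩ = dmap A W J p q 0 := by
    ext ⟨i, hi⟩
    simp [dmap, h0 i hi]
  simpa using congrArg Subtype.val (hi this)

lemma Gen.two {A : Arr E ι X} {W : Submodule ℝ E} {J : Finset ι} {y : E}
    (h : Gen A W J y) (hJ : J.card = Module.finrank ℝ W) {p q : ι → X}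
    (hpq : ∀ i ∈ J, p i ≠ q i ∧ A.Act i (p i) y ∧ A.Act i (q i) y) {i : ι} (hi : i ∈ J) {x : X}
    (hx : A.Act i x y) : x = p i ∨ x = q i := by
  by_contra hc
  push Not at hc
  obtain ⟨u, hu, s, hs⟩ := h.primal (fun j z => if j = i ∧ z = x then 1 else 0)
  have h0 : u = 0 := by
    apply h.inj hJ hpq hu
    intro j hj
    rw [hs j hj _ (hpq j hj).2.1, hs j hj _ (hpq j hj).2.2]
    by_cases hji : j = i
    · subst hji; simp [hc.1.symm, hc.2.symm]
    · simp [hji]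
  have h1 := hs i hi x hx
  have h2 := hs i hi _ (hpq i hi).2.1
  simp [h0, hc.1.symm] at h1 h2
  linarith

/-- choose the two active labels -/
lemma pt_pair {A : Arr E ι X} {J : Finset ι} {D : Set E} {y : E} (hy : y ∈ Pt A J D) [Nonempty X] :
    ∃ p q : ι → X, ∀ i ∈ J, p i ≠ q i ∧ A.Act i (p i) y ∧ A.Act i (q i) y := by
  have : ∀ i, ∃ x x' : X, i ∈ J → x ≠ x' ∧ A.Act i x y ∧ A.Act i x' y := by
    intro i
    by_cases hi : i ∈ J
    · obtain ⟨x, x', h⟩ := hy.2 i hi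
      exact ⟨x, x', fun _ => h⟩
    · exact ⟨Classical.arbitrary X, Classical.arbitrary X, fun h => absurd h hi⟩
  choose p q h using this
  exact ⟨p, q, h⟩

structure Good (A : Arr E ι X) (W : Submodule ℝ E) (J : Finset ι) (D : Set E) : Prop where
  closed : IsClosed D
  conv : Convex ℝ D
  sub : ∀ y ∈ D, ∀ y' ∈ D, y' - y ∈ W
  gen : ∀ y ∈ D, Gen A W J y
  card : J.card = Module.finrank ℝ W
  loc : ∀ p ∈ Pt A J D, ∀ u ∈ W, ∀ᶠ t in 𝓝[>] (0:ℝ), p + t • u ∈ D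

/-- two points with a common pair of active labels in each colour coincide -/
lemma Good.eq_of_act [Nonempty X] {A : Arr E ι X} {W : Submodule ℝ E} {J : Finset ι} {D : Set E} (G : Good A W J D)
    {p p' : E} (hp : p ∈ Pt A J D) (hp' : p' ∈ D)
    (h : ∀ i ∈ J, ∀ x, A.Act i x p → A.Act i x p') : p' = p := by
  obtain ⟨f, g, hfg⟩ := pt_pair hp
  have := (G.gen p hp.1).inj G.card hfg (G.sub p hp.1 p' hp') (fun i hi => by
    rw [A.l_sub, A.l_sub, A.act_eq (hfg i hi).2.1 (hfg i hi).2.2,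
      A.act_eq (h i hi _ (hfg i hi).2.1) (h i hi _ (hfg i hi).2.2)])
  exact sub_eq_zero.1 this

lemma Good.finite [Nonempty X] {A : Arr E ι X} {W : Submodule ℝ E} {J : Finset ι} {D : Set E}
    (G : Good A W J D) : (Pt A J D).Finite := by
  apply Set.Finite.of_injOn (f := fun p => fun i => univ.filter fun x => A.Act i x p)
    (t := (Set.univ : Set (ι → Finset X))) (fun _ _ => Set.mem_univ _) _ Set.finite_univ
  intro p hp p' hp' he
  refine (G.eq_of_act hp hp'.1 fun i hi x hx => ?_).symm
  have := congrFun he i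
  dsimp only at this
  have h2 : x ∈ (univ.filter fun x => A.Act i x p) := by simp [hx]
  rw [this] at h2
  simpa using h2

lemma Reg.closed (A : Arr E ι X) (J : Finset ι) {D : Set E} (hD : IsClosed D) (v : ι → X) :
    IsClosed (Reg A J D v) := by
  have : Reg A J D v = D ∩ ⋂ i ∈ J, {y | A.Act i (v i) y} := by
    ext y; simp [Reg]
  rw [this]
  exact hD.inter (isClosed_biInter fun i _ => A.act_closed i _)

lemma Reg.conv (A : Arr E ι X) (J : Finset ι) {D : Set E} (hD : Convex ℝ D) (v : ι → X) :
    Convex ℝ (Reg A J D v) := by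
  have : Reg A J D v = D ∩ ⋂ i ∈ J, {y | A.Act i (v i) y} := by
    ext y; simp [Reg]
  rw [this]
  exact hD.inter (convex_iInter fun i => convex_iInter fun _ => A.act_convex i _)

/-- strict decrease of distance along a segment -/
lemma dist_seg_lt {o q q' : E} (h : dist o q' ≤ dist o q) (hne : q' ≠ q) {t : ℝ} (h0 : 0 < t)
    (h1 : t < 1) : dist o (q + t • (q' - q)) < dist o q := by
  have := combo_mem_ball_of_ne (z := o) (r := dist o q) (x := q) (y := q') (a := 1 - t) (b := t)
    (by simp [dist_comm]) (by simpa [dist_comm] using h) hne.symm (by linarith) h0 (by ring)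
  have e : q + t • (q' - q) = (1 - t) • q + t • q' := by module
  rw [e, dist_comm]
  simpa using this

lemma elim {A : Arr E ι X} {J : Finset ι} {D : Set E} (hD : IsClosed D) (hDc : Convex ℝ D) (o : E)
    (z : (ι → X) → ZMod 2) (h0 : ∀ v, Reg A J D v = ∅ → z v = 0)
    (hc : ∀ v, ∀ i ∈ J, ∑ x, z (Function.update v i x) = 0)
    (hn : ∀ v q, q ∈ Reg A J D v → (∀ y ∈ Reg A J D v, dist o q ≤ dist o y) → q ∈ Pt A J D → z v = 0) :
    ∀ v, z v = 0 := by
  by_contra hne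
  push Not at hne
  obtain ⟨v0, hv0⟩ := hne
  have near : ∀ v, z v ≠ 0 → ∃ q ∈ Reg A J D v, Metric.infDist o (Reg A J D v) = dist o q := by
    intro v hv
    exact (Reg.closed A J hD v).exists_infDist_eq_dist
      (Set.nonempty_iff_ne_empty.2 fun h => hv (h0 v h)) o
  obtain ⟨v, hv, hmax⟩ := Finset.exists_max_image (univ.filter fun v => z v ≠ 0)
    (fun v => Metric.infDist o (Reg A J D v)) ⟨v0, by simp [hv0]⟩
  simp only [mem_filter, mem_univ, true_and] at hv hmax
  obtain ⟨q, hq, hqd⟩ := near v hv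
  have hqn : ∀ y ∈ Reg A J D v, dist o q ≤ dist o y := fun y hy => by
    rw [← hqd]; exact Metric.infDist_le_dist_of_mem hy
  have hnp : q ∉ Pt A J D := fun h => hv (hn v q hq hqn h)
  have : ∃ i ∈ J, ∀ x, A.Act i x q → x = v i := by
    by_contra hcon
    push Not at hcon
    exact hnp ⟨hq.1, fun i hi => by
      obtain ⟨x, hx, hxv⟩ := hcon i hi
      exact ⟨x, v i, hxv, hx, hq.2 i hi⟩⟩
  obtain ⟨i, hi, hiu⟩ := this
  have : ∃ x, x ≠ v i ∧ z (Function.update v i x) ≠ 0 := by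
    by_contra hcon
    push Not at hcon
    have h1 := hc v i hi
    rw [Finset.sum_eq_single (v i) (fun x _ hx => hcon x hx) (by simp)] at h1
    exact hv (by simpa using h1)
  obtain ⟨x, hx, hzx⟩ := this
  obtain ⟨q', hq', hqd'⟩ := near _ hzx
  have hle : dist o q' ≤ dist o q := by rw [← hqd, ← hqd']; exact hmax _ hzx
  have hxq' : A.Act i x q' := by simpa using hq'.2 i hi
  have hqq : q' ≠ q := by
    rintro rfl
    exact hx (hiu x hxq')
  have ev : ∀ᶠ t in 𝓝[>] (0:ℝ), A.Act i (v i) (q + t • (q' - q)) := by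
    apply A.act_persist (hq.2 i hi)
    intro x' hx'
    rw [hiu x' hx']
  have ev1 : ∀ᶠ t in 𝓝[>] (0:ℝ), t < 1 := nhdsWithin_le_nhds (Iio_mem_nhds one_pos)
  obtain ⟨t, ht, ht1, ht0⟩ := (ev.and (ev1.and self_mem_nhdsWithin)).exists
  have ht0' : 0 < t := ht0
  have hmem : q + t • (q' - q) ∈ Reg A J D v := by
    refine ⟨?_, fun k hk => ?_⟩
    · exact hDc.add_smul_sub_mem hq.1 hq'.1 ⟨ht0'.le, ht1.le⟩
    · by_cases hki : k = i
      · subst hki; exact ht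
      · refine A.act_seg (hq.2 k hk) ?_ ht0'.le ht1.le
        simpa [hki] using hq'.2 k hk
  exact absurd (hqn _ hmem) (not_le.2 (dist_seg_lt hle hqq ht0' ht1))

end Engine
end Sop

namespace Sop
open Filter Topology
open scoped Classical
set_option linter.unusedSectionVars false

section Engine2

/-- avoid finitely many affine hyperplanes -/
lemma avoid {V : Type*} [AddCommGroup V] [Module ℝ V] (T : Finset ((V →ₗ[ℝ] ℝ) × ℝ))
    (h : ∀ k ∈ T, k.1 ≠ 0) : ∃ y, ∀ k ∈ T, k.1 y ≠ k.2 := by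
  induction T using Finset.induction_on with
  | empty => exact ⟨0, by simp⟩
  | insert k T hk ih =>
    obtain ⟨y, hy⟩ := ih fun k' hk' => h k' (mem_insert_of_mem hk')
    have hk0 := h k (mem_insert_self _ _)
    obtain ⟨w, hw⟩ : ∃ w, k.1 w ≠ 0 := by
      by_contra hc
      push Not at hc
      exact hk0 (LinearMap.ext hc)
    have fin : (⋃ k' ∈ insert k T, {t : ℝ | k'.1 (y + t • w) = k'.2}).Finite := by
      refine Set.Finite.biUnion (Finset.finite_toSet _) fun k' hk' => ?_
      apply Set.Subsingleton.finite
      intro s hs t ht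
      simp only [Set.mem_ofPred_eq, map_add, map_smul, smul_eq_mul] at hs ht
      have e : (s - t) * k'.1 w = 0 := by linarith
      rcases mul_eq_zero.1 e with h1 | h1
      · linarith
      · exfalso
        rcases mem_insert.1 hk' with rfl | h2
        · exact hw h1
        · apply hy k' h2
          rw [h1] at hs; linarith
    obtain ⟨t, ht⟩ := fin.infinite_compl.nonempty
    refine ⟨y + t • w, fun k' hk' he => ht ?_⟩
    simp only [Set.mem_iUnion]
    exact ⟨k', hk', he⟩

variable {E : Type*} [NormedAddCommGroup E] [InnerProductSpace ℝ E] [FiniteDimensional ℝ E]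
variable {ι X : Type*} [Fintype ι] [Fintype X] [Nonempty X]

lemma Good.dual {A : Arr E ι X} {W : Submodule ℝ E} {J : Finset ι} {D : Set E} (G : Good A W J D)
    {p : E} (hp : p ∈ Pt A J D) : ∃ (f g : ι → X) (e : ι → E),
      (∀ i ∈ J, f i ≠ g i ∧ A.Act i (f i) p ∧ A.Act i (g i) p) ∧
      (∀ i, e i ∈ W) ∧ (∀ i, ∀ j ∈ J, A.a j (f j) (e i) - A.a j (g j) (e i) = if j = i then 1 else 0) := by
  obtain ⟨f, g, hfg⟩ := pt_pair hp
  have := fun i : ι => (G.gen p hp.1).surj hfg (fun j => if j = i then 1 else 0)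
  choose e he1 he2 using this
  exact ⟨f, g, e, hfg, he1, he2⟩

/-- nearest-point criterion -/
lemma near_of_inner {o p y : E} (h : inner ℝ (o - p) (y - p) ≤ 0) (hne : y ≠ p) :
    dist o p < dist o y := by
  rw [dist_eq_norm, dist_eq_norm]
  apply lt_of_pow_lt_pow_left₀ 2 (norm_nonneg _)
  have e : o - y = (o - p) - (y - p) := by abel
  rw [e, norm_sub_sq_real (o - p) (y - p)]
  have : 0 < ‖y - p‖ := norm_pos_iff.2 (sub_ne_zero.2 hne)
  nlinarith

lemma inner_of_near {o p u : E} (h : ∀ᶠ t in 𝓝[>] (0:ℝ), dist o p ≤ dist o (p + t • u)) :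
    inner ℝ (o - p) u ≤ 0 := by
  by_contra hc
  push Not at hc
  have h1 : ∀ᶠ t in 𝓝[>] (0:ℝ), t * ‖u‖^2 < 2 * inner ℝ (o - p) u := by
    have : ContinuousAt (fun t : ℝ => t * ‖u‖^2) 0 := by fun_prop
    have := this.eventually_lt (continuousAt_const (y := 2 * inner ℝ (o - p) u)) (by simpa using hc)
    exact this.filter_mono nhdsWithin_le_nhds
  obtain ⟨t, ht, ht1, ht0⟩ := (h.and (h1.and self_mem_nhdsWithin)).exists
  have ht0' : 0 < t := ht0
  rw [dist_eq_norm, dist_eq_norm] at ht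
  have e : o - (p + t • u) = (o - p) - t • u := by abel
  have h2 := pow_le_pow_left₀ (norm_nonneg _) ht 2
  rw [e, norm_sub_sq_real (o - p) (t • u), inner_smul_right, norm_smul, mul_pow, Real.norm_eq_abs, sq_abs] at h2
  nlinarith

lemma Good.vp {A : Arr E ι X} {W : Submodule ℝ E} {J : Finset ι} {D : Set E} (G : Good A W J D)
    {S : Finset E} (hS : ∀ p, p ∈ S ↔ p ∈ Pt A J D) :
    ∃ (o : E) (vp : E → ι → X), ∀ p ∈ S, p ∈ Reg A J D (vp p) ∧
      (∀ y ∈ Reg A J D (vp p), y ≠ p → dist o p < dist o y) ∧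
      ∀ v, p ∈ Reg A J D v → (∀ y ∈ Reg A J D v, dist o p ≤ dist o y) → ∀ i ∈ J, v i = vp p i := by
  have hd : ∀ p, ∃ (f g : ι → X) (e : ι → E), p ∈ S →
      (∀ i ∈ J, f i ≠ g i ∧ A.Act i (f i) p ∧ A.Act i (g i) p) ∧
      (∀ i, e i ∈ W) ∧ (∀ i, ∀ j ∈ J, A.a j (f j) (e i) - A.a j (g j) (e i) = if j = i then 1 else 0) := by
    intro p
    by_cases hp : p ∈ S
    · obtain ⟨f, g, e, h⟩ := G.dual ((hS p).1 hp)
      exact ⟨f, g, e, fun _ => h⟩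
    · exact ⟨fun _ => Classical.arbitrary X, fun _ => Classical.arbitrary X, 0, fun h => absurd h hp⟩
  choose f g e hd using hd
  -- generic base point
  obtain ⟨o, ho⟩ := avoid ((S ×ˢ J).image fun k =>
      ((innerₛₗ ℝ (e k.1 k.2) : E →ₗ[ℝ] ℝ), inner ℝ (e k.1 k.2) k.1)) (by
    intro k hk
    obtain ⟨⟨p, i⟩, hpi, rfl⟩ := mem_image.1 hk
    simp only [mem_product] at hpi
    intro h0
    have h1 : inner ℝ (e p i) (e p i) = 0 := by
      have := LinearMap.congr_fun h0 (e p i)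
      simpa using this
    have h2 := (hd p hpi.1).2.2 i i hpi.2
    rw [inner_self_eq_zero.1 h1] at h2
    simp at h2)
  have hgen : ∀ p ∈ S, ∀ i ∈ J, inner ℝ (o - p) (e p i) ≠ 0 := by
    intro p hp i hi h0
    apply ho ((innerₛₗ ℝ (e p i) : E →ₗ[ℝ] ℝ), inner ℝ (e p i) p)
      (mem_image.2 ⟨(p, i), by simp [hp, hi], rfl⟩)
    rw [inner_sub_left, sub_eq_zero] at h0
    simp only [innerₛₗ_apply_apply]
    rw [real_inner_comm, h0, real_inner_comm]
  refine ⟨o, fun p i => if inner ℝ (o - p) (e p i) ≤ 0 then f p i else g p i, fun p hp => ?_⟩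
  obtain ⟨h1, h2, h3⟩ := hd p hp
  have hpP := (hS p).1 hp
  refine ⟨⟨hpP.1, fun i hi => ?_⟩, fun y hy hyp => near_of_inner ?_ hyp, fun v hv hnear i hi => ?_⟩
  · dsimp only; split_ifs
    exacts [(h1 i hi).2.1, (h1 i hi).2.2]
  · -- expand y - p in the dual basis
    have hu := G.sub p hpP.1 y hy.1
    have hexp : y - p - ∑ i ∈ J, (A.a i (f p i) (y - p) - A.a i (g p i) (y - p)) • e p i = 0 := by
      apply (G.gen p hpP.1).inj G.card h1
      · exact W.sub_mem hu (W.sum_mem fun i _ => W.smul_mem _ (h2 i))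
      · intro j hj
        rw [← sub_eq_zero]
        simp only [map_sub, map_sum, map_smul, smul_eq_mul]
        have : ∀ i, A.a j (f p j) (e p i) = A.a j (g p j) (e p i) + if j = i then 1 else 0 := by
          intro i; have := h3 i j hj; linarith
        simp only [this, mul_add, Finset.sum_add_distrib]
        simp [hj]
        ring
    rw [sub_eq_zero.1 hexp, inner_sum]
    apply Finset.sum_nonpos
    intro i hi
    rw [inner_smul_right]
    have hyi := hy.2 i hi
    dsimp only at hyi
    have tie := A.act_eq (h1 i hi).2.1 (h1 i hi).2.2
    rw [A.l_sub, A.l_sub]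
    split_ifs at hyi with hs
    · have := hyi (g p i)
      apply mul_nonpos_of_nonneg_of_nonpos _ hs
      linarith
    · have := hyi (f p i)
      push Not at hs
      apply mul_nonpos_of_nonpos_of_nonneg _ hs.le
      linarith
  · -- uniqueness
    have htwo := fun {j} (hj : j ∈ J) {x} (hx : A.Act j x p) =>
      (G.gen p hpP.1).two G.card h1 hj hx
    have hmove : ∀ s : ℝ, (∀ x, A.Act i x p → A.a i x (s • e p i) ≤ A.a i (v i) (s • e p i)) →
        inner ℝ (o - p) (s • e p i) ≤ 0 := by
      intro s hs
      apply inner_of_near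
      have e1 := G.loc p hpP (s • e p i) (W.smul_mem _ (h2 i))
      have e2 : ∀ᶠ t in 𝓝[>] (0:ℝ), ∀ j : ι, j ∈ J → A.Act j (v j) (p + t • (s • e p i)) := by
        rw [eventually_all]
        intro j
        by_cases hj : j ∈ J
        · have : ∀ᶠ t in 𝓝[>] (0:ℝ), A.Act j (v j) (p + t • (s • e p i)) := by
            apply A.act_persist (hv.2 j hj)
            by_cases hji : j = i
            · subst hji; exact hs
            · intro x hx
              have h4 := h3 i j hj
              rw [if_neg hji] at h4
              simp only [map_smul, smul_eq_mul]
              rcases htwo hj hx with rfl | rfl <;> rcases htwo hj (hv.2 j hj) with h5 | h5 <;>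
                rw [h5] <;> apply le_of_eq <;> congr 1 <;> linarith
          exact this.mono fun t ht _ => ht
        · exact Eventually.of_forall fun t h => absurd h hj
      filter_upwards [e1, e2] with t h4 h5
      exact hnear _ ⟨h4, h5⟩
    have h4 := h3 i i hi
    rw [if_pos rfl] at h4
    rcases htwo hi (hv.2 i hi) with h5 | h5
    · have := hmove 1 (by
        intro x hx
        rw [h5]
        rcases htwo hi hx with rfl | rfl <;> simp; linarith)
      rw [one_smul] at this
      simp [this, h5]
    · have := hmove (-1) (by
        intro x hx
        rw [h5]
        rcases htwo hi hx with rfl | rfl <;> simp; linarith)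
      have h6 := hgen p hp i hi
      have h7 : ¬ inner ℝ (o - p) (e p i) ≤ 0 := by
        intro h8
        apply h6
        simp only [neg_smul, one_smul, inner_neg_right] at this
        linarith
      simp [h7, h5]

noncomputable def fc (A : Arr E ι X) (J : Finset ι) (S : Finset E) (c : E → ZMod 2) (v : ι → X) : ZMod 2 :=
  ∑ p ∈ S.filter (fun p => ∀ i ∈ J, A.Act i (v i) p), c p

lemma fc_congr {A : Arr E ι X} {J : Finset ι} {S : Finset E} {c : E → ZMod 2} {v v' : ι → X}
    (h : ∀ i ∈ J, v i = v' i) : fc A J S c v = fc A J S c v' := by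
  unfold fc
  congr 1
  ext p
  simp only [mem_filter, and_congr_right_iff]
  intro _
  exact forall₂_congr fun i hi => by rw [h i hi]

lemma fc_sub {A : Arr E ι X} {J : Finset ι} {S : Finset E} {c c' : E → ZMod 2} {v : ι → X} :
    fc A J S (fun p => c p - c' p) v = fc A J S c v - fc A J S c' v := by
  unfold fc
  rw [Finset.sum_sub_distrib]

lemma fc_empty {A : Arr E ι X} {J : Finset ι} {D : Set E} {S : Finset E}
    (hS : ∀ p, p ∈ S ↔ p ∈ Pt A J D) {c : E → ZMod 2} {v : ι → X} (h : Reg A J D v = ∅) :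
    fc A J S c v = 0 := by
  unfold fc
  apply Finset.sum_eq_zero
  intro p hp
  exfalso
  rw [mem_filter] at hp
  have : p ∈ Reg A J D v := ⟨((hS p).1 hp.1).1, hp.2⟩
  rw [h] at this
  exact this

/-- independence at special regions -/
lemma ind_aux {A : Arr E ι X} {J : Finset ι} {D : Set E}
    {S : Finset E} (hS : ∀ p, p ∈ S ↔ p ∈ Pt A J D) {o : E} {vp : E → ι → X}
    (hvp : ∀ p ∈ S, p ∈ Reg A J D (vp p) ∧ (∀ y ∈ Reg A J D (vp p), y ≠ p → dist o p < dist o y))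
    {c : E → ZMod 2} (h : ∀ p ∈ S, fc A J S c (vp p) = 0) : ∀ p ∈ S, c p = 0 := by
  by_contra hc
  push Not at hc
  obtain ⟨p0, hp0, hcp0⟩ := hc
  obtain ⟨p, hp, hmax⟩ := Finset.exists_max_image (S.filter fun p => c p ≠ 0) (fun p => dist o p)
    ⟨p0, by simp [hp0, hcp0]⟩
  rw [mem_filter] at hp
  apply hp.2
  rw [← h p hp.1]
  unfold fc
  rw [Finset.sum_eq_single p]
  · intro q hq hqp
    rw [mem_filter] at hq
    by_contra hcq
    have h1 := hmax q (by simp [hq.1, hcq])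
    have h2 := (hvp p hp.1).2 q ⟨((hS q).1 hq.1).1, hq.2⟩ hqp
    linarith
  · intro hn
    exact absurd (mem_filter.2 ⟨hp.1, (hvp p hp.1).1.2⟩) hn

lemma Good.ind {A : Arr E ι X} {W : Submodule ℝ E} {J : Finset ι} {D : Set E} (G : Good A W J D)
    {S : Finset E} (hS : ∀ p, p ∈ S ↔ p ∈ Pt A J D) {c : E → ZMod 2}
    (h : ∀ v, fc A J S c v = 0) : ∀ p ∈ S, c p = 0 := by
  obtain ⟨o, vp, hvp⟩ := G.vp hS
  exact ind_aux hS (fun p hp => ⟨(hvp p hp).1, (hvp p hp).2.1⟩) (fun p _ => h _)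

lemma Good.cyc {A : Arr E ι X} {W : Submodule ℝ E} {J : Finset ι} {D : Set E} (G : Good A W J D)
    {S : Finset E} (hS : ∀ p, p ∈ S ↔ p ∈ Pt A J D) (c : E → ZMod 2) (v : ι → X) {i : ι}
    (hi : i ∈ J) : ∑ x, fc A J S c (Function.update v i x) = 0 := by
  unfold fc
  simp only [Finset.sum_filter]
  rw [Finset.sum_comm]
  apply Finset.sum_eq_zero
  intro p hp
  have hpP := (hS p).1 hp
  obtain ⟨f, g, hfg⟩ := pt_pair hpP
  have hiff : ∀ x, (∀ j ∈ J, A.Act j (Function.update v i x j) p) ↔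
      (A.Act i x p ∧ ∀ j ∈ J, j ≠ i → A.Act j (v j) p) := by
    intro x
    constructor
    · intro h
      refine ⟨by simpa using h i hi, fun j hj hji => by simpa [hji] using h j hj⟩
    · rintro ⟨h1, h2⟩ j hj
      by_cases hji : j = i
      · subst hji; simpa using h1
      · simpa [hji] using h2 j hj hji
  simp only [hiff]
  by_cases hR : ∀ j ∈ J, j ≠ i → A.Act j (v j) p
  · have hx : ∀ x, A.Act i x p ↔ (x = f i ∨ x = g i) := by
      intro x
      constructor
      · exact (G.gen p hpP.1).two G.card hfg hi
      · rintro (rfl | rfl)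
        exacts [(hfg i hi).2.1, (hfg i hi).2.2]
    have : ∀ x, (A.Act i x p ∧ ∀ j ∈ J, j ≠ i → A.Act j (v j) p) ↔ x ∈ ({f i, g i} : Finset X) := by
      intro x; simp only [mem_insert, mem_singleton]; rw [← hx]; tauto
    simp only [this]
    rw [Finset.sum_ite_mem, Finset.univ_inter, Finset.sum_const, Finset.card_pair (hfg i hi).1]
    rw [two_smul]; exact CharTwo.add_self_eq_zero _
  · apply Finset.sum_eq_zero
    intro x _
    rw [if_neg]
    tauto

lemma Good.span {A : Arr E ι X} {W : Submodule ℝ E} {J : Finset ι} {D : Set E} (G : Good A W J D)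
    {S : Finset E} (hS : ∀ p, p ∈ S ↔ p ∈ Pt A J D) (z : (ι → X) → ZMod 2)
    (h0 : ∀ v, Reg A J D v = ∅ → z v = 0)
    (hc : ∀ v, ∀ i ∈ J, ∑ x, z (Function.update v i x) = 0)
    (hJ : ∀ v v', (∀ i ∈ J, v i = v' i) → z v = z v') :
    ∃ c : E → ZMod 2, ∀ v, z v = fc A J S c v := by
  obtain ⟨o, vp, hvp⟩ := G.vp hS
  let ext0 : (S → ZMod 2) → E → ZMod 2 := fun c p => if hp : p ∈ S then c ⟨p, hp⟩ else 0
  let Φ : (S → ZMod 2) → (S → ZMod 2) := fun c p => fc A J S (ext0 c) (vp p)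
  have hinj : Function.Injective Φ := by
    intro c c' h
    ext ⟨p, hp⟩
    have := ind_aux hS (fun p hp => ⟨(hvp p hp).1, (hvp p hp).2.1⟩)
      (c := fun p => ext0 c p - ext0 c' p) (fun q hq => by
        rw [fc_sub, sub_eq_zero]; exact congrFun h ⟨q, hq⟩) p hp
    simp only [ext0, hp, dif_pos] at this
    exact sub_eq_zero.1 this
  obtain ⟨c, hcc⟩ := (Finite.injective_iff_surjective.1 hinj) (fun p => z (vp p))
  refine ⟨ext0 c, fun v => ?_⟩
  rw [← sub_eq_zero]
  refine elim (A := A) (J := J) G.closed G.conv o (fun v => z v - fc A J S (ext0 c) v) ?_ ?_ ?_ v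
  · intro v hv
    simp only [h0 v hv, fc_empty hS hv, sub_zero]
  · intro v i hi
    rw [Finset.sum_sub_distrib, hc v i hi, G.cyc hS _ v hi, sub_zero]
  · intro v q hq hn hqP
    have hqS := (hS q).2 hqP
    have hv := (hvp q hqS).2.2 v hq hn
    have h1 := congrFun hcc ⟨q, hqS⟩
    simp only [Φ] at h1
    rw [hJ v _ hv, fc_congr hv, h1, sub_self]

end Engine2
end Sop

namespace Sop
open Filter Topology
open scoped Classical
set_option linter.unusedSectionVars false

section Engine3

variable {E : Type*} [NormedAddCommGroup E] [InnerProductSpace ℝ E] [FiniteDimensional ℝ E]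
variable {ι X : Type*} [Fintype ι] [Fintype X] [Nonempty X]

lemma rec_dir {R : Set E} (hc : IsClosed R) (hv : Convex ℝ R) {y : E} (hy : y ∈ R)
    (hb : ¬ Bornology.IsBounded R) : ∃ u, u ≠ 0 ∧ ∀ t : ℝ, 0 ≤ t → y + t • u ∈ R := by
  have h1 : ∀ n : ℕ, ∃ x ∈ R, (n : ℝ) < ‖x - y‖ := by
    intro n
    by_contra hcon
    push Not at hcon
    apply hb
    refine (Metric.isBounded_closedBall (x := y) (r := n)).subset fun x hx => ?_
    rw [Metric.mem_closedBall, dist_eq_norm]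
    exact hcon x hx
  choose x hxR hx using h1
  let d : ℕ → E := fun n => (‖x n - y‖)⁻¹ • (x n - y)
  have hpos : ∀ n, 0 < ‖x n - y‖ := fun n => lt_of_le_of_lt (Nat.cast_nonneg n) (hx n)
  have hd : ∀ n, d n ∈ Metric.sphere (0:E) 1 := by
    intro n
    simp [d, norm_smul, (hpos n).ne']
  obtain ⟨u, hu, φ, hφ, hlim⟩ := (isCompact_sphere (0:E) 1).tendsto_subseq hd
  refine ⟨u, ?_, fun t ht => ?_⟩
  · rintro rfl
    simp at hu
  · have hl : Tendsto (fun n => y + t • d (φ n)) atTop (𝓝 (y + t • u)) :=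
      (hlim.const_smul t).const_add y
    apply hc.mem_of_tendsto hl
    obtain ⟨N, hN⟩ := exists_nat_ge t
    filter_upwards [eventually_ge_atTop N] with n hn
    have h2 : t ≤ ‖x (φ n) - y‖ := by
      have h3 : (n : ℝ) ≤ φ n := by exact_mod_cast hφ.id_le n
      have h4 : (N : ℝ) ≤ n := by exact_mod_cast hn
      have := hx (φ n)
      linarith
    have h5 := hv.add_smul_sub_mem hy (hxR (φ n)) (t := t * (‖x (φ n) - y‖)⁻¹)
      ⟨by have := hpos (φ n); positivity, by rw [← div_eq_mul_inv, div_le_one (hpos _)]; exact h2⟩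
    simpa [d, smul_smul] using h5

lemma Arr.ray_le (A : Arr E ι X) {i : ι} {x : X} {y u : E}
    (h : ∀ t : ℝ, 0 ≤ t → A.Act i x (y + t • u)) (w : X) : A.a i w u ≤ A.a i x u := by
  by_contra hc
  push Not at hc
  set δ := A.a i w u - A.a i x u with hδ
  have hδ0 : 0 < δ := by rw [hδ]; linarith
  have h1 := h ((|A.l i x y - A.l i w y| + 1) / δ) (by positivity) w
  rw [A.l_add_smul, A.l_add_smul] at h1
  have h2 : (|A.l i x y - A.l i w y| + 1) / δ * δ = |A.l i x y - A.l i w y| + 1 := by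
    field_simp
  have h3 := le_abs_self (A.l i x y - A.l i w y)
  rw [hδ, mul_sub] at h2
  rw [← hδ] at h2
  linarith

lemma Arr.act_ray (A : Arr E ι X) {i : ι} {x : X} {y u : E} (h : A.Act i x y)
    (hu : ∀ w, A.a i w u ≤ A.a i x u) {t : ℝ} (ht : 0 ≤ t) : A.Act i x (y + t • u) := by
  intro w
  rw [A.l_add_smul, A.l_add_smul]
  have := mul_le_mul_of_nonneg_left (hu w) ht
  linarith [h w]

lemma slice_fin {A : Arr E ι X} {W : Submodule ℝ E} {J : Finset ι} {D : Set E}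
    (hsub : ∀ y ∈ D, ∀ y' ∈ D, y' - y ∈ W) (hgen : ∀ y ∈ D, Gen A W J y) (ξ : E →ₗ[ℝ] ℝ) :
    {C | ∃ y ∈ D, ξ y = C ∧ ¬ Gen A (W ⊓ LinearMap.ker ξ) J y}.Finite := by
  by_cases hξ : ∃ u ∈ W, ξ u ≠ 0
  swap
  · push Not at hξ
    have : W ⊓ LinearMap.ker ξ = W := by
      rw [inf_eq_left]; exact fun u hu => hξ u hu
    rw [this]
    convert Set.finite_empty
    ext C
    simp only [Set.mem_ofPred_eq, Set.mem_empty_iff_false, iff_false]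
    rintro ⟨y, hy, -, h⟩
    exact h (hgen y hy)
  obtain ⟨u0, hu0, hξ0⟩ := hξ
  have hsubset : {C | ∃ y ∈ D, ξ y = C ∧ ¬ Gen A (W ⊓ LinearMap.ker ξ) J y} ⊆
      ⋃ τ : ι → Finset X, {C | ∃ y ∈ D, ξ y = C ∧ ¬ Gen A (W ⊓ LinearMap.ker ξ) J y ∧
        τ = fun i => univ.filter fun x => A.Act i x y} := by
    rintro C ⟨y, hy, h1, h2⟩
    simp only [Set.mem_iUnion]
    exact ⟨_, y, hy, h1, h2, rfl⟩
  refine Set.Finite.subset (Set.finite_iUnion fun τ => Set.Subsingleton.finite ?_) hsubset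
  rintro C ⟨y, hy, rfl, hng, hτ⟩ C' ⟨y', hy', rfl, -, hτ'⟩
  have hact : ∀ i x, A.Act i x y ↔ A.Act i x y' := by
    intro i x
    have := congrFun (hτ.symm.trans hτ') i
    have h2 := Finset.ext_iff.1 this x
    simpa using h2
  unfold Gen at hng
  push Not at hng
  obtain ⟨μ, h1, h2, h3, h4⟩ := hng
  set g : E → ℝ := fun u => ∑ i, ∑ x, μ i x * A.a i x u with hg
  have gadd : ∀ u v, g (u - v) = g u - g v := by
    intro u v
    simp only [hg, map_sub, mul_sub, Finset.sum_sub_distrib]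
  have gsmul : ∀ (t : ℝ) u, g (t • u) = t * g u := by
    intro t u
    simp only [hg, map_smul, smul_eq_mul, Finset.mul_sum]
    refine Finset.sum_congr rfl fun i _ => Finset.sum_congr rfl fun x _ => by ring
  have gker : ∀ u ∈ W, ξ u = 0 → g u = 0 := fun u hu h0 => h3 u ⟨hu, h0⟩
  have gmul : ∀ u ∈ W, g u = (ξ u / ξ u0) * g u0 := by
    intro u hu
    have := gker (u - (ξ u / ξ u0) • u0) (W.sub_mem hu (W.smul_mem _ hu0)) (by
      simp; field_simp; simp)
    rw [gadd, gsmul] at this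
    linarith
  have g0 : g u0 ≠ 0 := by
    intro h0
    apply h4
    apply hgen y hy μ h1 h2
    intro u hu
    have := gmul u hu
    rw [h0, mul_zero] at this
    exact this
  have tie : ∀ i, ∑ x, μ i x * A.a i x (y' - y) = 0 := by
    intro i
    by_cases hi : ∃ x0, μ i x0 ≠ 0
    · obtain ⟨x0, hx0⟩ := hi
      have hx0a := (h2 i x0 hx0).2
      have : ∀ x, μ i x * A.a i x (y' - y) = μ i x * (A.l i x0 y' - A.l i x0 y) := by
        intro x
        by_cases hx : μ i x = 0
        · simp [hx]
        · have hxa := (h2 i x hx).2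
          rw [A.l_sub, A.act_eq hxa hx0a, A.act_eq ((hact _ _).1 hxa) ((hact _ _).1 hx0a)]
      simp only [this]
      rw [← Finset.sum_mul, h1, zero_mul]
    · push Not at hi
      simp [hi]
  have h5 : g (y' - y) = 0 := by
    simp only [hg]
    exact Finset.sum_eq_zero fun i _ => tie i
  rw [gmul _ (hsub y hy y' hy')] at h5
  have h6 : ξ (y' - y) = 0 := by
    rcases mul_eq_zero.1 h5 with h | h
    · rcases div_eq_zero_iff.1 h with h | h
      · exact h
      · exact absurd h hξ0
    · exact absurd h g0
  rw [map_sub] at h6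
  linarith

/-- slope functional of label `w` of colour `j`, relative to the average -/
noncomputable def xi (A : Arr E ι X) (j : ι) (w : X) : E →ₗ[ℝ] ℝ :=
  (Fintype.card X : ℝ) • A.a j w - ∑ x, A.a j x

lemma xi_apply (A : Arr E ι X) (j : ι) (w : X) (u : E) :
    xi A j w u = ∑ x, (A.a j w u - A.a j x u) := by
  simp [xi, Finset.sum_sub_distrib, LinearMap.sum_apply]

lemma xi_pos {A : Arr E ι X} {j : ι} {w : X} {u : E} (h : ∀ x, A.a j x u ≤ A.a j w u)
    (hc : ∃ x x', A.a j x u ≠ A.a j x' u) : 0 < xi A j w u := by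
  rw [xi_apply]
  apply Finset.sum_pos'
  · intro x _; linarith [h x]
  · by_contra hcon
    push Not at hcon
    obtain ⟨x, x', hne⟩ := hc
    have h1 := hcon x (mem_univ _)
    have h2 := hcon x' (mem_univ _)
    have h3 := h x
    have h4 := h x'
    exact hne (by linarith)

lemma finrank_slice {W : Submodule ℝ E} {ξ : E →ₗ[ℝ] ℝ} {u : E} (hu : u ∈ W) (h : ξ u ≠ 0) :
    Module.finrank ℝ (W ⊓ LinearMap.ker ξ : Submodule ℝ E) + 1 = Module.finrank ℝ W := by
  let f : W →ₗ[ℝ] ℝ := ξ ∘ₗ W.subtype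
  have h1 := LinearMap.finrank_range_add_finrank_ker f
  have h2 : LinearMap.range f = ⊤ := by
    rw [LinearMap.range_eq_top]
    apply LinearMap.surjective
    intro h0
    exact h (by simpa [f] using LinearMap.congr_fun h0 ⟨u, hu⟩)
  have h3 : (W ⊓ LinearMap.ker ξ : Submodule ℝ E) = (LinearMap.ker f).map W.subtype := by
    ext x
    simp only [Submodule.mem_inf, LinearMap.mem_ker, Submodule.mem_map]
    constructor
    · rintro ⟨hx, h0⟩
      exact ⟨⟨x, hx⟩, by simpa [f] using h0, rfl⟩
    · rintro ⟨⟨z, hz⟩, h0, rfl⟩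
      exact ⟨hz, by simpa [f] using h0⟩
  have h4 : Module.finrank ℝ (W ⊓ LinearMap.ker ξ : Submodule ℝ E) = Module.finrank ℝ (LinearMap.ker f) := by
    rw [h3]
    exact Submodule.finrank_map_subtype_eq _ _
  rw [h2, finrank_top, Module.finrank_self] at h1
  omega

end Engine3
end Sop

namespace Sop
open Filter Topology
open scoped Classical
set_option linter.unusedSectionVars false

section Engine4

variable {E : Type*} [NormedAddCommGroup E] [InnerProductSpace ℝ E] [FiniteDimensional ℝ E]
variable {ι X : Type*} [Fintype ι] [Fintype X] [Nonempty X]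

def Aff (W : Submodule ℝ E) (y0 : E) : Set E := {y | y - y0 ∈ W}

lemma Aff.closed (W : Submodule ℝ E) (y0 : E) : IsClosed (Aff W y0) :=
  (Submodule.closed_of_finiteDimensional W).preimage (by fun_prop : Continuous fun y => y - y0)

lemma Aff.conv (W : Submodule ℝ E) (y0 : E) : Convex ℝ (Aff W y0) := by
  intro x hx y hy a b _ _ hab
  have : a • x + b • y - y0 = a • (x - y0) + b • (y - y0) := by
    have : y0 = (a + b) • y0 := by rw [hab, one_smul]
    nth_rewrite 1 [this]
    module
  show _ ∈ W
  rw [this]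
  exact W.add_mem (W.smul_mem _ hx) (W.smul_mem _ hy)

lemma Aff.sub {W : Submodule ℝ E} {y0 : E} : ∀ y ∈ Aff W y0, ∀ y' ∈ Aff W y0, y' - y ∈ W := by
  intro y hy y' hy'
  have := W.sub_mem hy' hy
  simpa using this

lemma Aff.add {W : Submodule ℝ E} {y0 y u : E} (hy : y ∈ Aff W y0) (hu : u ∈ W) (t : ℝ) :
    y + t • u ∈ Aff W y0 := by
  show _ ∈ W
  have := W.add_mem hy (W.smul_mem t hu)
  convert this using 1
  abel

lemma Aff.good {A : Arr E ι X} {W : Submodule ℝ E} {y0 : E} {J : Finset ι}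
    (hgen : ∀ y ∈ Aff W y0, Gen A W J y) (hc : J.card = Module.finrank ℝ W) :
    Good A W J (Aff W y0) where
  closed := Aff.closed W y0
  conv := Aff.conv W y0
  sub := Aff.sub
  gen := hgen
  card := hc
  loc := fun _ hp _ hu => Eventually.of_forall fun t => Aff.add hp.1 hu t

def Cell (A : Arr E ι X) (D : Set E) (τ : ι → Finset X) : Set E :=
  {y | y ∈ D ∧ ∀ i, ∀ x ∈ τ i, A.Act i x y}

lemma Cell.closed (A : Arr E ι X) {D : Set E} (hD : IsClosed D) (τ : ι → Finset X) :
    IsClosed (Cell A D τ) := by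
  have : Cell A D τ = D ∩ ⋂ i, ⋂ x ∈ τ i, {y | A.Act i x y} := by
    ext y; simp [Cell]
  rw [this]
  exact hD.inter (isClosed_iInter fun i => isClosed_biInter fun x _ => A.act_closed i x)

lemma Cell.conv (A : Arr E ι X) {D : Set E} (hD : Convex ℝ D) (τ : ι → Finset X) :
    Convex ℝ (Cell A D τ) := by
  have : Cell A D τ = D ∩ ⋂ i, ⋂ x ∈ τ i, {y | A.Act i x y} := by
    ext y; simp [Cell]
  rw [this]
  exact hD.inter (convex_iInter fun i => convex_iInter fun x => convex_iInter fun _ => A.act_convex i x)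

lemma reg_eq_cell (A : Arr E ι X) (J : Finset ι) (D : Set E) (v : ι → X) :
    Reg A J D v = Cell A D (fun i => if i ∈ J then {v i} else ∅) := by
  ext y
  simp only [Reg, Cell, Set.mem_ofPred_eq, and_congr_right_iff]
  intro _
  refine forall_congr' fun i => ?_
  by_cases hi : i ∈ J <;> simp [hi]

lemma bdd_of_bounded {R : Set E} (h : Bornology.IsBounded R) (ξ : E →ₗ[ℝ] ℝ) :
    ∃ B, ∀ y ∈ R, ξ y ≤ B := by
  have h1 : IsCompact (closure R) := h.isCompact_closure
  obtain ⟨B, hB⟩ := (h1.image (LinearMap.continuous_of_finiteDimensional ξ)).bddAbove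
  exact ⟨B, fun y hy => hB ⟨y, subset_closure hy, rfl⟩⟩

lemma thr (A : Arr E ι X) (D : Set E) (ξ : E →ₗ[ℝ] ℝ) : ∃ B : ℝ, ∀ τ : ι → Finset X,
    (Bornology.IsBounded (Cell A D τ) → ∀ y ∈ Cell A D τ, ξ y ≤ B) ∧
    ((Cell A D τ).Nonempty → ∃ y ∈ Cell A D τ, ξ y ≤ B) := by
  have : ∀ τ : ι → Finset X, ∃ B : ℝ, 
    (Bornology.IsBounded (Cell A D τ) → ∀ y ∈ Cell A D τ, ξ y ≤ B) ∧
    ((Cell A D τ).Nonempty → ∃ y ∈ Cell A D τ, ξ y ≤ B) := by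
    intro τ
    by_cases hb : Bornology.IsBounded (Cell A D τ)
    · obtain ⟨B, hB⟩ := bdd_of_bounded hb ξ
      exact ⟨B, fun _ => hB, fun ⟨y, hy⟩ => ⟨y, hy, hB y hy⟩⟩
    · by_cases hne : (Cell A D τ).Nonempty
      · obtain ⟨y, hy⟩ := hne
        exact ⟨ξ y, fun h => absurd h hb, fun _ => ⟨y, hy, le_rfl⟩⟩
      · exact ⟨0, fun h => absurd h hb, fun h => absurd h hne⟩
  choose B hB using this
  obtain ⟨M, hM⟩ := Finite.exists_le B
  refine ⟨M, fun τ => ⟨fun h y hy => ((hB τ).1 h y hy).trans (hM τ), fun h => ?_⟩⟩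
  obtain ⟨y, hy, hle⟩ := (hB τ).2 h
  exact ⟨y, hy, hle.trans (hM τ)⟩

lemma thr2 (A : Arr E ι X) (J : Finset ι) (D : Set E) (ξ : E →ₗ[ℝ] ℝ) : ∃ B : ℝ, ∀ v : ι → X,
    (∃ M, ∀ y ∈ Reg A J D v, ξ y ≤ M) → ∀ y ∈ Reg A J D v, ξ y ≤ B := by
  have : ∀ v : ι → X, ∃ B : ℝ, (∃ M, ∀ y ∈ Reg A J D v, ξ y ≤ M) → ∀ y ∈ Reg A J D v, ξ y ≤ B := by
    intro v
    by_cases h : ∃ M, ∀ y ∈ Reg A J D v, ξ y ≤ M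
    · obtain ⟨M, hM⟩ := h
      exact ⟨M, fun _ => hM⟩
    · exact ⟨0, fun h' => absurd h' h⟩
  choose B hB using this
  obtain ⟨M, hM⟩ := Finite.exists_le B
  exact ⟨M, fun v h y hy => (hB v h y hy).trans (hM v)⟩

lemma exists_big {F : Set ℝ} (hF : F.Finite) (B : ℝ) : ∃ C, B < C ∧ C ∉ F := by
  obtain ⟨C, h1, h2⟩ := (Set.Ioi_infinite B).exists_notMem_finset hF.toFinset
  exact ⟨C, h1, by simpa using h2⟩

def Coer (A : Arr E ι X) (W : Submodule ℝ E) (J : Finset ι) : Prop :=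
  ∀ i ∈ J, ∀ u ∈ W, u ≠ 0 → ∃ x x', A.a i x u ≠ A.a i x' u

lemma card_lt_of_two {A : Arr E ι X} {W : Submodule ℝ E} {J : Finset ι} {y : E}
    (h : Gen A W J y) (hlt : Module.finrank ℝ W < J.card) :
    ¬ ∀ i ∈ J, ∃ x x', x ≠ x' ∧ A.Act i x y ∧ A.Act i x' y := by
  intro hP
  obtain ⟨f, g, hfg⟩ := pt_pair (D := Set.univ) (A := A) (J := J) (y := y) ⟨trivial, hP⟩
  have := h.card_le hfg
  omega

lemma raySlice {A : Arr E ι X} {W : Submodule ℝ E} {y0 : E} {J : Finset ι}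
    (hgen : ∀ y ∈ Aff W y0, Gen A W J y) (hcard : J.card = Module.finrank ℝ W)
    (hco : Coer A W J) {j : ι} (hj : j ∈ J) (w : X) :
    ∃ (S : Finset E) (dir : E → E),
      (∀ p ∈ S, p ∈ Pt A (J.erase j) (Aff W y0) ∧ A.Act j w p ∧ (∀ x, A.Act j x p → x = w) ∧
        dir p ∈ W ∧ dir p ≠ 0 ∧
        (∀ i ∈ J.erase j, ∀ x, A.Act i x p → ∀ x', A.a i x' (dir p) ≤ A.a i x (dir p)) ∧
        (∀ x', A.a j x' (dir p) ≤ A.a j w (dir p))) ∧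
      (∀ p ∈ S, ∀ p' ∈ S, xi A j w p = xi A j w p') ∧
      (∀ z : (ι → X) → ZMod 2, (∀ v, Bornology.IsBounded (Reg A J (Aff W y0) v) → z v = 0) →
        (∀ v, ∀ i ∈ J, ∑ x, z (Function.update v i x) = 0) →
        (∀ v v', (∀ i ∈ J, v i = v' i) → z v = z v') →
        ∃ c : E → ZMod 2, ∀ v, z (Function.update v j w) = fc A (J.erase j) S c v) := by
  set L := Aff W y0 with hL
  set ξ := xi A j w with hξ
  -- unbounded regions have rays
  have hray : ∀ v, v j = w → ∀ y ∈ Reg A J L v, ¬ Bornology.IsBounded (Reg A J L v) →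
      ∃ u ∈ W, 0 < ξ u ∧ ∀ t : ℝ, 0 ≤ t → y + t • u ∈ Reg A J L v := by
    intro v hvj y hy hb
    obtain ⟨u, hu0, hu⟩ := rec_dir (Reg.closed A J (Aff.closed W y0) v)
      (Reg.conv A J (Aff.conv W y0) v) hy hb
    have huW : u ∈ W := by
      have := Aff.sub y hy.1 _ (hu 1 zero_le_one).1
      simpa using this
    refine ⟨u, huW, xi_pos ?_ (hco j hj u huW hu0), hu⟩
    intro x
    rw [← hvj]
    exact A.ray_le (fun t ht => (hu t ht).2 j hj) x
  by_cases hz : ∃ u ∈ W, ξ u ≠ 0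
  swap
  · push Not at hz
    refine ⟨∅, fun _ => 0, by simp, by simp, fun z hz0 _ _ => ⟨0, fun v => ?_⟩⟩
    simp only [fc, Finset.filter_empty, Finset.sum_empty]
    apply hz0
    by_contra hb
    rcases (Reg A J L (Function.update v j w)).eq_empty_or_nonempty with he | ⟨y, hy⟩
    · rw [he] at hb; exact hb Bornology.isBounded_empty
    · obtain ⟨u, hu, hpos, -⟩ := hray _ (by simp) y hy hb
      rw [hz u hu] at hpos
      exact lt_irrefl _ hpos
  obtain ⟨u0, hu0, hξu0⟩ := hz
  obtain ⟨B, hB⟩ := thr A L ξ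
  obtain ⟨C, hBC, hCF⟩ := exists_big (slice_fin (A := A) (J := J) Aff.sub hgen ξ) B
  set W' := W ⊓ LinearMap.ker ξ with hW'
  have hgen' : ∀ y ∈ L, ξ y = C → Gen A W' J y := by
    intro y hy hyC
    by_contra hc
    exact hCF ⟨y, hy, hyC, hc⟩
  have hfr := finrank_slice hu0 hξu0
  rw [← hW'] at hfr
  have hcard' : (J.erase j).card + 1 = J.card := Finset.card_erase_add_one hj
  set D : Set E := {y | y ∈ L ∧ A.Act j w y ∧ ξ y = C} with hD
  have hDc : IsClosed D :=
    (Aff.closed W y0).inter ((A.act_closed j w).inter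
      (isClosed_eq (LinearMap.continuous_of_finiteDimensional ξ) continuous_const))
  have hDv : Convex ℝ D := by
    refine (Aff.conv W y0).inter ((A.act_convex j w).inter ?_)
    exact convex_hyperplane ξ.isLinear C
  have honly : ∀ p ∈ Pt A (J.erase j) D, ∀ x, A.Act j x p → x = w := by
    intro p hp x hx
    by_contra hne
    refine card_lt_of_two (hgen' p hp.1.1 hp.1.2.2) (by omega) fun i hi => ?_
    by_cases hij : i = j
    · subst hij; exact ⟨x, w, hne, hx, hp.1.2.1⟩
    · exact hp.2 i (mem_erase.2 ⟨hij, hi⟩)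
  have G : Good A W' (J.erase j) D :=
    { closed := hDc
      conv := hDv
      sub := fun y hy y' hy' => ⟨Aff.sub y hy.1 y' hy'.1, by
        show ξ (y' - y) = 0
        rw [map_sub, hy.2.2, hy'.2.2, sub_self]⟩
      gen := fun y hy => (hgen' y hy.1 hy.2.2).mono (erase_subset _ _)
      card := by omega
      loc := by
        intro p hp u hu
        have := A.act_persist (u := u) hp.1.2.1 (fun x hx => by rw [honly p hp x hx])
        filter_upwards [this] with t ht
        refine ⟨Aff.add hp.1.1 hu.1 t, ht, ?_⟩
        have : ξ u = 0 := hu.2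
        rw [map_add, map_smul, this, hp.1.2.2]; simp }
  have hSf := G.finite
  have hS : ∀ p, p ∈ hSf.toFinset ↔ p ∈ Pt A (J.erase j) D := fun p => by simp
  have hdir : ∀ p, ∃ u, p ∈ Pt A (J.erase j) D → u ∈ W ∧ u ≠ 0 ∧
      (∀ i ∈ J.erase j, ∀ x, A.Act i x p → ∀ x', A.a i x' u ≤ A.a i x u) ∧
        (∀ x', A.a j x' u ≤ A.a j w u) := by
    intro p
    by_cases hp : p ∈ Pt A (J.erase j) D
    swap
    · exact ⟨0, fun h => absurd h hp⟩
    let τ : ι → Finset X := fun i => if i = j then {w} else if i ∈ J then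
      univ.filter (fun x => A.Act i x p) else ∅
    have hpc : p ∈ Cell A L τ := by
      refine ⟨hp.1.1, fun i x hx => ?_⟩
      simp only [τ] at hx
      split_ifs at hx with h1 h2
      · subst h1; rw [mem_singleton] at hx; subst hx; exact hp.1.2.1
      · simpa using hx
      · simp at hx
    have hub : ¬ Bornology.IsBounded (Cell A L τ) := by
      intro hb
      have := (hB τ).1 hb p hpc
      rw [hp.1.2.2] at this
      linarith
    obtain ⟨u, hu0, hu⟩ := rec_dir (Cell.closed A (Aff.closed W y0) τ)
      (Cell.conv A (Aff.conv W y0) τ) hpc hub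
    refine ⟨u, fun _ => ⟨?_, hu0, ?_, ?_⟩⟩
    · have := Aff.sub p hp.1.1 _ (hu 1 zero_le_one).1
      simpa using this
    · intro i hi x hx x'
      rw [mem_erase] at hi
      exact A.ray_le (fun t ht => (hu t ht).2 i x (by simp [τ, hi.1, hi.2, hx])) x'
    · intro x'
      exact A.ray_le (fun t ht => (hu t ht).2 j w (by simp [τ])) x'
  choose dir hdir using hdir
  refine ⟨hSf.toFinset, dir, ?_, ?_, ?_⟩
  · intro p hp
    have hp' := (hS p).1 hp
    obtain ⟨h1, h2, h3, h4⟩ := hdir p hp'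
    exact ⟨⟨hp'.1.1, hp'.2⟩, hp'.1.2.1, honly p hp', h1, h2, h3, h4⟩
  · intro p hp p' hp'
    rw [((hS p).1 hp).1.2.2, ((hS p').1 hp').1.2.2]
  · intro z hz0 hzc hzJ
    apply G.span hS (fun v => z (Function.update v j w))
    · intro v hv
      apply hz0
      by_contra hb
      rcases (Reg A J L (Function.update v j w)).eq_empty_or_nonempty with he | hne
      · rw [he] at hb; exact hb Bornology.isBounded_empty
      · have hne' := hne
        rw [reg_eq_cell] at hne'
        obtain ⟨y, hy, hyB⟩ := (hB _).2 hne'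
        rw [← reg_eq_cell] at hy
        obtain ⟨u, hu, hpos, hrr⟩ := hray _ (by simp) y hy hb
        have hm := hrr ((C - ξ y) / ξ u) (div_nonneg (by linarith) hpos.le)
        have : y + ((C - ξ y) / ξ u) • u ∈ Reg A (J.erase j) D v := by
          refine ⟨⟨hm.1, by simpa using hm.2 j hj, ?_⟩, fun i hi => ?_⟩
          · rw [map_add, map_smul, smul_eq_mul, div_mul_cancel₀ _ hpos.ne']; ring
          · rw [mem_erase] at hi
            simpa [hi.1] using hm.2 i hi.2
        rw [hv] at this
        exact this
    · intro v i hi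
      rw [mem_erase] at hi
      simp only [Function.update_comm hi.1]
      exact hzc _ i hi.2
    · intro v v' hvv
      apply hzJ
      intro i hi
      by_cases hij : i = j
      · subst hij; simp
      · simpa [hij] using hvv i (mem_erase.2 ⟨hij, hi⟩)

end Engine4
end Sop

namespace Sop
open Filter Topology
open scoped Classical
set_option linter.unusedSectionVars false

section Engine5

variable {E : Type*} [NormedAddCommGroup E] [InnerProductSpace ℝ E] [FiniteDimensional ℝ E]
variable {ι X : Type*} [Fintype ι] [Fintype X] [Nonempty X]

/-- Data of a finite family of rays in an affine subspace. -/
structure Rays (A : Arr E ι X) (W : Submodule ℝ E) (y0 : E) (J : Finset ι) {κ : Type*}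
    (PP : Finset κ) (pos dir : κ → E) : Prop where
  pt : ∀ P ∈ PP, pos P ∈ Pt A J (Aff W y0)
  mem : ∀ P ∈ PP, dir P ∈ W
  ne : ∀ P ∈ PP, dir P ≠ 0
  ray : ∀ P ∈ PP, ∀ i ∈ J, ∀ x, A.Act i x (pos P) → ∀ x', A.a i x' (dir P) ≤ A.a i x (dir P)
  inj : ∀ P ∈ PP, ∀ P' ∈ PP, ∀ s : ℝ, 0 < s → dir P' = s • dir P → ∀ t : ℝ,
    pos P' = pos P + t • dir P → P = P'

lemma side {A : Arr E ι X} {W : Submodule ℝ E} {y0 : E} {J : Finset ι}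
    (hgen : ∀ y ∈ Aff W y0, Gen A W J y) (hcard : J.card + 1 = Module.finrank ℝ W)
    (hco : Coer A W J) {κ : Type*} {PP : Finset κ} {pos dir : κ → E}
    (R : Rays A W y0 J PP pos dir) (hPP : PP.Nonempty) (b : E →ₗ[ℝ] ℝ)
    (hb : ∀ P ∈ PP, b (dir P) ≠ 0) :
    ∃ (W' : Submodule ℝ E) (y1 : E) (S : Finset E) (Ψ : (κ → ZMod 2) → (E → ZMod 2)) (π : κ → E),
      W' ≤ W ∧ J.card = Module.finrank ℝ W' ∧ (∀ y ∈ Aff W' y1, Gen A W' J y) ∧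
      (∀ p, p ∈ S ↔ p ∈ Pt A J (Aff W' y1)) ∧
      (∀ d v, fc A J S (Ψ d) v =
        ∑ P ∈ PP.filter (fun P => 0 < b (dir P) ∧ ∀ i ∈ J, A.Act i (v i) (pos P)), d P) ∧
      (∀ P ∈ PP, 0 < b (dir P) → π P ∈ S ∧ ∀ d, Ψ d (π P) = d P) ∧
      (J.Nonempty → ∀ v, (Reg A J (Aff W' y1) v).Nonempty →
        Bornology.IsBounded (Reg A J (Aff W' y1) v) →
        ∀ P ∈ PP, (∀ i ∈ J, A.Act i (v i) (pos P)) → 0 < b (dir P)) := by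
  obtain ⟨P0, hP0⟩ := hPP
  obtain ⟨B1, hB1⟩ := thr2 A J (Aff W y0) b
  obtain ⟨B2, hB2⟩ := Finset.exists_le (PP.image fun P => b (pos P))
  have hB2' : ∀ P ∈ PP, b (pos P) ≤ B2 := fun P hP => hB2 _ (mem_image_of_mem _ hP)
  obtain ⟨C, hBC, hCF⟩ := exists_big (slice_fin (A := A) (J := J) Aff.sub hgen b) (max B1 B2)
  have hC1 : B1 < C := lt_of_le_of_lt (le_max_left _ _) hBC
  have hC2 : B2 < C := lt_of_le_of_lt (le_max_right _ _) hBC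
  set W' := W ⊓ LinearMap.ker b with hW'
  set u0 := dir P0
  have hu0 : u0 ∈ W := R.mem P0 hP0
  have hbu0 : b u0 ≠ 0 := hb P0 hP0
  set y1 := y0 + ((C - b y0) / b u0) • u0 with hy1
  have hby1 : b y1 = C := by
    rw [hy1, map_add, map_smul, smul_eq_mul, div_mul_cancel₀ _ hbu0]; ring
  have hy1L : y1 ∈ Aff W y0 := Aff.add (by simp [Aff]) hu0 _
  have hL' : ∀ y, y ∈ Aff W' y1 ↔ y ∈ Aff W y0 ∧ b y = C := by
    intro y
    constructor
    · intro hy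
      have h1 : y - y1 ∈ W := hy.1
      have h2 : b (y - y1) = 0 := hy.2
      refine ⟨?_, by rw [map_sub] at h2; linarith⟩
      have := W.add_mem h1 hy1L
      simpa [Aff] using this
    · rintro ⟨h1, h2⟩
      exact ⟨Aff.sub y1 hy1L y h1, by show b (y - y1) = 0; rw [map_sub, h2, hby1, sub_self]⟩
  have hgen' : ∀ y ∈ Aff W' y1, Gen A W' J y := by
    intro y hy
    obtain ⟨h1, h2⟩ := (hL' y).1 hy
    by_contra hc
    exact hCF ⟨y, h1, h2, hc⟩
  have hfr := finrank_slice hu0 hbu0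
  rw [← hW'] at hfr
  have hcard' : J.card = Module.finrank ℝ W' := by omega
  have G := Aff.good hgen' hcard'
  have hSf := G.finite
  have hS : ∀ p, p ∈ hSf.toFinset ↔ p ∈ Pt A J (Aff W' y1) := fun p => by simp
  let tt : κ → ℝ := fun P => (C - b (pos P)) / b (dir P)
  let π : κ → E := fun P => pos P + tt P • dir P
  have hbπ : ∀ P ∈ PP, b (π P) = C := by
    intro P hP
    simp only [π, tt]
    rw [map_add, map_smul, smul_eq_mul, div_mul_cancel₀ _ (hb P hP)]; ring
  have hact1 : ∀ P ∈ PP, 0 < b (dir P) → ∀ i ∈ J, ∀ x, A.Act i x (pos P) → A.Act i x (π P) := by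
    intro P hP hpos i hi x hx
    exact A.act_ray hx (R.ray P hP i hi x hx)
      (div_nonneg (by linarith [hB2' P hP]) hpos.le)
  have hπS : ∀ P ∈ PP, 0 < b (dir P) → π P ∈ Pt A J (Aff W' y1) := by
    intro P hP hpos
    refine ⟨(hL' _).2 ⟨Aff.add (R.pt P hP).1 (R.mem P hP) _, hbπ P hP⟩, fun i hi => ?_⟩
    obtain ⟨x, x', hne, h1, h2⟩ := (R.pt P hP).2 i hi
    exact ⟨x, x', hne, hact1 P hP hpos i hi x h1, hact1 P hP hpos i hi x' h2⟩
  have hact : ∀ P ∈ PP, 0 < b (dir P) → ∀ i ∈ J, ∀ x, A.Act i x (π P) ↔ A.Act i x (pos P) := by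
    intro P hP hpos i hi x
    refine ⟨fun hx => ?_, hact1 P hP hpos i hi x⟩
    obtain ⟨f, g, hfg⟩ := pt_pair (R.pt P hP)
    have hp := hπS P hP hpos
    rcases (G.gen _ hp.1).two G.card (p := f) (q := g) (fun k hk => ⟨(hfg k hk).1,
      hact1 P hP hpos k hk _ (hfg k hk).2.1, hact1 P hP hpos k hk _ (hfg k hk).2.2⟩) hi hx with h | h
    · rw [h]; exact (hfg i hi).2.1
    · rw [h]; exact (hfg i hi).2.2
  have hinj : ∀ P ∈ PP, 0 < b (dir P) → ∀ P' ∈ PP, 0 < b (dir P') → π P = π P' → P = P' := by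
    intro P hP hpos P' hP' hpos' he
    have hp := hπS P hP hpos
    obtain ⟨f, g, hfg⟩ := pt_pair hp
    set s := b (dir P') / b (dir P) with hs
    have hd : dir P' - s • dir P = 0 := by
      apply (G.gen _ hp.1).inj G.card hfg
      · refine ⟨W.sub_mem (R.mem P' hP') (W.smul_mem _ (R.mem P hP)), ?_⟩
        show b _ = 0
        rw [map_sub, map_smul, smul_eq_mul, hs, div_mul_cancel₀ _ hpos.ne', sub_self]
      · intro i hi
        have q1 := (hact P hP hpos i hi _).1 (hfg i hi).2.1
        have q2 := (hact P hP hpos i hi _).1 (hfg i hi).2.2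
        have q3 := (hact P' hP' hpos' i hi _).1 (he ▸ (hfg i hi).2.1)
        have q4 := (hact P' hP' hpos' i hi _).1 (he ▸ (hfg i hi).2.2)
        have e1 := le_antisymm (R.ray P hP i hi _ q1 (g i)) (R.ray P hP i hi _ q2 (f i))
        have e2 := le_antisymm (R.ray P' hP' i hi _ q3 (g i)) (R.ray P' hP' i hi _ q4 (f i))
        simp only [map_sub, map_smul, e1, e2]
    have hd' := sub_eq_zero.1 hd
    refine R.inj P hP P' hP' s (div_pos hpos' hpos) hd' (tt P - tt P' * s) ?_
    have : pos P' = π P' - tt P' • dir P' := by simp [π]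
    rw [this, ← he, hd']
    simp only [π]
    module
  let Ψ : (κ → ZMod 2) → (E → ZMod 2) := fun d q =>
    ∑ P ∈ PP.filter (fun P => 0 < b (dir P) ∧ π P = q), d P
  refine ⟨W', y1, hSf.toFinset, Ψ, π, inf_le_left, hcard', hgen', hS, ?_, ?_, ?_⟩
  · intro d v
    unfold fc
    simp only [Ψ]
    have : PP.filter (fun P => 0 < b (dir P) ∧ ∀ i ∈ J, A.Act i (v i) (pos P)) =
      (hSf.toFinset.filter (fun p => ∀ i ∈ J, A.Act i (v i) p)).biUnion
        (fun q => PP.filter (fun P => 0 < b (dir P) ∧ π P = q)) := by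
      ext P
      simp only [mem_filter, mem_biUnion, hS]
      constructor
      · rintro ⟨h1, h2, h3⟩
        exact ⟨π P, ⟨hπS P h1 h2, fun i hi => (hact P h1 h2 i hi _).2 (h3 i hi)⟩, h1, h2, rfl⟩
      · rintro ⟨q, ⟨h1, h2⟩, h3, h4, rfl⟩
        exact ⟨h3, h4, fun i hi => (hact P h3 h4 i hi _).1 (h2 i hi)⟩
    rw [this, Finset.sum_biUnion]
    intro q _ q' _ hqq
    rw [Function.onFun, Finset.disjoint_left]
    intro P h1 h2
    simp only [mem_filter] at h1 h2
    exact hqq (h1.2.2.symm.trans h2.2.2)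
  · intro P hP hpos
    refine ⟨(hS _).2 (hπS P hP hpos), fun d => ?_⟩
    simp only [Ψ]
    rw [Finset.sum_eq_single P]
    · intro P' hP' hne
      rw [mem_filter] at hP'
      exact absurd (hinj P' hP'.1 hP'.2.1 P hP hpos hP'.2.2) hne
    · intro h
      exact absurd (mem_filter.2 ⟨hP, hpos, rfl⟩) h
  · rintro ⟨i, hi⟩ v hne hbd P hP hv
    by_contra hcon
    have hneg : b (dir P) < 0 := lt_of_le_of_ne (not_lt.1 hcon) (hb P hP)
    set u := dir P with hu
    have hrec : ∀ k ∈ J, ∀ x', A.a k x' u ≤ A.a k (v k) u := fun k hk =>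
      R.ray P hP k hk _ (hv k hk)
    obtain ⟨x, hx⟩ : ∃ x, A.a i x u < A.a i (v i) u := by
      obtain ⟨x, x', hxx⟩ := hco i hi u (R.mem P hP) (R.ne P hP)
      by_contra hcc
      push Not at hcc
      exact hxx (by rw [le_antisymm (hrec i hi x) (hcc x), le_antisymm (hrec i hi x') (hcc x')])
    set δ := A.a i (v i) u - A.a i x u with hδ
    have hδ0 : 0 < δ := by linarith
    obtain ⟨M, hM⟩ := bdd_of_bounded hbd (A.a i (v i) - A.a i x)
    -- `b` is unbounded above on the region
    have hunb : ¬ ∃ M, ∀ y ∈ Reg A J (Aff W y0) v, b y ≤ M := by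
      intro h
      obtain ⟨y, hy⟩ := hne
      have h1 := (hL' y).1 hy.1
      have := hB1 v h y ⟨h1.1, hy.2⟩
      linarith [h1.2]
    push Not at hunb
    set N := |M| + |A.ω i x - A.ω i (v i)| + 1 with hN
    obtain ⟨y, hy, hyb⟩ := hunb (C + (-b u) * (N / δ))
    set s := (b y - C) / (- b u) with hs
    have hbu : 0 < - b u := by linarith
    have hsN : N / δ < s := by
      rw [hs, lt_div_iff₀ hbu]; linarith
    have hs0 : 0 ≤ s := le_trans (by positivity) hsN.le
    have hmem : y + s • u ∈ Reg A J (Aff W' y1) v := by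
      refine ⟨(hL' _).2 ⟨Aff.add hy.1 (R.mem P hP) _, ?_⟩, fun k hk =>
        A.act_ray (hy.2 k hk) (hrec k hk) hs0⟩
      rw [map_add, map_smul, smul_eq_mul, hs]
      have h9 : b u ≠ 0 := hneg.ne
      field_simp
      ring
    have h1 := hM _ hmem
    have h2 := hy.2 i hi x
    simp only [Arr.l] at h2
    simp only [LinearMap.sub_apply, map_add, map_smul, smul_eq_mul] at h1
    have h3 : N < s * δ := by rwa [div_lt_iff₀ hδ0] at hsN
    have h4 := le_abs_self M
    have h5 := neg_le_abs (A.ω i x - A.ω i (v i))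
    rw [hδ, mul_sub] at h3
    linarith

def KP (A : Arr E ι X) (m : ℕ) : Prop :=
  ∀ (W : Submodule ℝ E) (J : Finset ι) (y0 : E) (S : Finset E), Module.finrank ℝ W = m →
    J.card = m → (∀ y ∈ Aff W y0, Gen A W J y) → Coer A W J →
    (∀ p, p ∈ S ↔ p ∈ Pt A J (Aff W y0)) → ∀ c c' : E → ZMod 2,
    (J.Nonempty → ∀ v, Bornology.IsBounded (Reg A J (Aff W y0) v) → fc A J S c v = 0) →
    (J.Nonempty → ∀ v, Bornology.IsBounded (Reg A J (Aff W y0) v) → fc A J S c' v = 0) →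
    (∀ p ∈ S, c p = 0) ∨ (∀ p ∈ S, c' p = 0) ∨ (∀ p ∈ S, c p - c' p = 0)

lemma raysKP {A : Arr E ι X} {W : Submodule ℝ E} {y0 : E} {J : Finset ι} (IH : KP A J.card)
    (hgen : ∀ y ∈ Aff W y0, Gen A W J y) (hcard : J.card + 1 = Module.finrank ℝ W)
    (hco : Coer A W J) {κ : Type*} {PP : Finset κ} {pos dir : κ → E}
    (R : Rays A W y0 J PP pos dir) (d d' : κ → ZMod 2)
    (hd : ∀ v : ι → X, ∑ P ∈ PP.filter (fun P => ∀ i ∈ J, A.Act i (v i) (pos P)), d P = 0)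
    (hd' : ∀ v : ι → X, ∑ P ∈ PP.filter (fun P => ∀ i ∈ J, A.Act i (v i) (pos P)), d' P = 0) :
    (∀ P ∈ PP, d P = 0) ∨ (∀ P ∈ PP, d' P = 0) ∨ (∀ P ∈ PP, d P - d' P = 0) := by
  rcases PP.eq_empty_or_nonempty with he | hPP
  · left; rw [he]; simp
  obtain ⟨b, hb⟩ : ∃ b : E →ₗ[ℝ] ℝ, ∀ P ∈ PP, b (dir P) ≠ 0 := by
    obtain ⟨b, hb⟩ := avoid (V := E →ₗ[ℝ] ℝ) (PP.image fun P =>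
      ((LinearMap.applyₗ (dir P) : (E →ₗ[ℝ] ℝ) →ₗ[ℝ] ℝ), (0:ℝ))) (by
      intro k hk
      obtain ⟨P, hP, rfl⟩ := mem_image.1 hk
      intro h0
      apply R.ne P hP
      have := LinearMap.congr_fun h0 (innerₛₗ ℝ (dir P) : E →ₗ[ℝ] ℝ)
      simpa using this)
    refine ⟨b, fun P hP => ?_⟩
    have := hb _ (mem_image_of_mem _ hP)
    simpa using this
  obtain ⟨W1, y1, S1, Ψ1, π1, hW1, hc1, hg1, hS1, hf1, hπ1, hb1⟩ := side hgen hcard hco R hPP b hb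
  obtain ⟨W2, y2, S2, Ψ2, π2, hW2, hc2, hg2, hS2, hf2, hπ2, hb2⟩ := side hgen hcard hco R hPP (-b)
    (fun P hP => by simpa using hb P hP)
  -- vanishing on one side forces vanishing
  have van : ∀ e : κ → ZMod 2,
      (∀ v : ι → X, ∑ P ∈ PP.filter (fun P => ∀ i ∈ J, A.Act i (v i) (pos P)), e P = 0) →
      (∀ P ∈ PP, 0 < b (dir P) → e P = 0) → ∀ P ∈ PP, e P = 0 := by
    intro e he h0 P hP
    rcases lt_or_gt_of_ne (hb P hP) with hneg | hpos
    swap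
    · exact h0 P hP hpos
    have h1 : ∀ v, fc A J S2 (Ψ2 e) v = 0 := by
      intro v
      rw [hf2, ← he v]
      apply Finset.sum_subset
      · intro Q hQ
        simp only [mem_filter] at hQ ⊢
        exact ⟨hQ.1, hQ.2.2⟩
      · intro Q hQ hQ'
        simp only [mem_filter] at hQ hQ'
        apply h0 Q hQ.1
        rcases lt_or_gt_of_ne (hb Q hQ.1) with h | h
        · exfalso; apply hQ'; exact ⟨hQ.1, by simpa using h, hQ.2⟩
        · exact h
    have h2 := (Aff.good hg2 hc2).ind hS2 h1
    obtain ⟨h3, h4⟩ := hπ2 P hP (by simpa using hneg)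
    rw [← h4 e]
    exact h2 _ h3
  have hker : ∀ e : κ → ZMod 2,
      (∀ v : ι → X, ∑ P ∈ PP.filter (fun P => ∀ i ∈ J, A.Act i (v i) (pos P)), e P = 0) →
      (J.Nonempty → ∀ v, Bornology.IsBounded (Reg A J (Aff W1 y1) v) → fc A J S1 (Ψ1 e) v = 0) := by
    intro e he hJ v hbd
    rcases (Reg A J (Aff W1 y1) v).eq_empty_or_nonempty with hem | hne
    · exact fc_empty hS1 hem
    rw [hf1, ← he v]
    congr 1
    ext P
    simp only [mem_filter]
    constructor
    · rintro ⟨h1, h2, h3⟩; exact ⟨h1, h3⟩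
    · rintro ⟨h1, h3⟩; exact ⟨h1, hb1 hJ v hne hbd P h1 h3, h3⟩
  rcases IH W1 J y1 S1 hc1.symm rfl hg1 (fun i hi u hu => hco i hi u (hW1 hu)) hS1 (Ψ1 d) (Ψ1 d')
    (hker d hd) (hker d' hd') with h | h | h
  · left
    refine van d hd fun P hP hpos => ?_
    obtain ⟨h3, h4⟩ := hπ1 P hP hpos
    rw [← h4 d]; exact h _ h3
  · right; left
    refine van d' hd' fun P hP hpos => ?_
    obtain ⟨h3, h4⟩ := hπ1 P hP hpos
    rw [← h4 d']; exact h _ h3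
  · right; right
    refine van (fun P => d P - d' P) (fun v => ?_) fun P hP hpos => ?_
    · rw [Finset.sum_sub_distrib, hd, hd', sub_zero]
    obtain ⟨h3, h4⟩ := hπ1 P hP hpos
    rw [← h4 d, ← h4 d']; exact h _ h3

end Engine5
end Sop

namespace Sop
open Filter Topology
open scoped Classical
set_option linter.unusedSectionVars false

section Engine6

variable {E : Type*} [NormedAddCommGroup E] [InnerProductSpace ℝ E] [FiniteDimensional ℝ E]
variable {ι X : Type*} [Fintype ι] [Fintype X] [Nonempty X]

lemma kp_zero (A : Arr E ι X) : KP A 0 := by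
  intro W J y0 S hW hJ _ _ hS c c' _ _
  have hW0 : W = ⊥ := Submodule.finrank_eq_zero.1 hW
  have : ∀ p ∈ S, p = y0 := by
    intro p hp
    have h := ((hS p).1 hp).1
    have h2 : p - y0 ∈ W := h
    rw [hW0, Submodule.mem_bot] at h2
    exact sub_eq_zero.1 h2
  have tri : ∀ a b : ZMod 2, a = 0 ∨ b = 0 ∨ a - b = 0 := by decide
  rcases tri (c y0) (c' y0) with h | h | h
  · left; intro p hp; rw [this p hp, h]
  · right; left; intro p hp; rw [this p hp, h]
  · right; right; intro p hp; rw [this p hp, h]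

lemma kp_succ (A : Arr E ι X) (m : ℕ) (IH : KP A m) : KP A (m + 1) := by
  intro W J y0 S hW hJ hgen hco hS c c' hc hc'
  have hJn : J.Nonempty := by rw [← Finset.card_pos]; omega
  obtain ⟨j, hj⟩ := hJn
  have G := Aff.good hgen (hJ.trans hW.symm)
  have hcardJ : J.card = Module.finrank ℝ W := hJ.trans hW.symm
  choose T dir hT1 hT2 hT3 using fun w => raySlice hgen hcardJ hco hj w
  have hJe : (J.erase j).card = m := by rw [Finset.card_erase_of_mem hj]; omega
  let PP : Finset ((_ : X) × E) := univ.sigma T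
  have hPP : ∀ P : (_ : X) × E, P ∈ PP ↔ P.2 ∈ T P.1 := by intro P; simp [PP]
  have R : Rays A W y0 (J.erase j) PP (fun P => P.2) (fun P => dir P.1 P.2) := by
    refine ⟨fun P hP => ?_, fun P hP => ?_, fun P hP => ?_, fun P hP => ?_, ?_⟩
    · exact (hT1 _ _ ((hPP P).1 hP)).1
    · exact (hT1 _ _ ((hPP P).1 hP)).2.2.2.1
    · exact (hT1 _ _ ((hPP P).1 hP)).2.2.2.2.1
    · exact (hT1 _ _ ((hPP P).1 hP)).2.2.2.2.2.1
    · rintro ⟨w, p⟩ hP ⟨w', p'⟩ hP' s hs hdir t hpos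
      dsimp only at hdir hpos
      have hp := (hPP _).1 hP
      have hp' := (hPP _).1 hP'
      dsimp only at hp hp'
      obtain ⟨a1, a2, a3, a4, a5, a6, a7⟩ := hT1 _ _ hp
      obtain ⟨b1, b2, b3, b4, b5, b6, b7⟩ := hT1 _ _ hp'
      have e1 : A.a j w (dir w p) = A.a j w' (dir w p) := by
        apply le_antisymm _ (a7 w')
        have := b7 w
        rw [hdir, map_smul, map_smul, smul_eq_mul, smul_eq_mul] at this
        exact le_of_mul_le_mul_left this hs
      have e2 := b2 w
      rw [hpos, A.l_add_smul, A.l_add_smul, e1] at e2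
      have hww : w' = w := a3 w' (fun x => (a2 x).trans (by linarith))
      subst hww
      have e3 := hT2 _ _ hp _ hp'
      have e4 : 0 < xi A j w' (dir w' p) := xi_pos a7 (hco j hj _ a4 a5)
      rw [hpos, map_add, map_smul, smul_eq_mul] at e3
      have e5 : t = 0 := by
        have : t * xi A j w' (dir w' p) = 0 := by linarith
        rcases mul_eq_zero.1 this with h | h
        · exact h
        · exact absurd h e4.ne'
      rw [e5, zero_smul, add_zero] at hpos
      rw [hpos]
  -- coefficients
  have coef : ∀ c : E → ZMod 2,
      (J.Nonempty → ∀ v, Bornology.IsBounded (Reg A J (Aff W y0) v) → fc A J S c v = 0) →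
      ∃ d : ((_ : X) × E) → ZMod 2,
        (∀ v w, fc A J S c (Function.update v j w) = fc A (J.erase j) (T w) (fun p => d ⟨w, p⟩) v) ∧
        (∀ v : ι → X, ∑ P ∈ PP.filter (fun P => ∀ i ∈ J.erase j, A.Act i (v i) P.2), d P = 0) := by
    intro c hc
    choose d hd using fun w => hT3 w (fun v => fc A J S c v) (hc ⟨j, hj⟩)
      (fun v i hi => G.cyc hS c v hi) (fun v v' h => fc_congr h)
    refine ⟨fun P => d P.1 P.2, fun v w => hd w v, fun v => ?_⟩
    rw [← G.cyc hS c v hj, Finset.sum_filter, Finset.sum_sigma]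
    refine Finset.sum_congr rfl fun w _ => ?_
    rw [hd w v, fc, Finset.sum_filter]
  obtain ⟨d, hd1, hd2⟩ := coef c hc
  obtain ⟨d', hd1', hd2'⟩ := coef c' hc'
  have fin : ∀ (c : E → ZMod 2) (d : ((_ : X) × E) → ZMod 2),
      (∀ v w, fc A J S c (Function.update v j w) = fc A (J.erase j) (T w) (fun p => d ⟨w, p⟩) v) →
      (∀ P ∈ PP, d P = 0) → ∀ p ∈ S, c p = 0 := by
    intro c d h1 h2
    apply G.ind hS
    intro v
    rw [← Function.update_eq_self j v, h1]
    unfold fc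
    apply Finset.sum_eq_zero
    intro p hp
    exact h2 _ ((hPP _).2 (mem_filter.1 hp).1)
  rcases raysKP (J := J.erase j) (by rw [hJe]; exact IH)
    (fun y hy => (hgen y hy).mono (Finset.erase_subset _ _)) (by omega)
    (fun i hi => hco i (Finset.mem_of_mem_erase hi)) R d d' hd2 hd2' with h | h | h
  · left; exact fin c d hd1 h
  · right; left; exact fin c' d' hd1' h
  · right; right
    refine fin (fun p => c p - c' p) (fun P => d P - d' P) (fun v w => ?_) h
    rw [fc_sub, hd1, hd1', fc_sub]

lemma kp_all (A : Arr E ι X) (m : ℕ) : KP A m := by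
  induction m with
  | zero => exact kp_zero A
  | succ m ih => exact kp_succ A m ih

/-- linear algebra over `ZMod 2`: count from kernel information -/
lemma count_of_ker {A : Arr E ι X} {J : Finset ι} {S : Finset E} (BD : Finset (ι → X)) (r : ℕ)
    (hr : r ≤ 1)
    (h0 : r = 0 → ∀ c : E → ZMod 2, (∀ v ∈ BD, fc A J S c v = 0) → ∀ p ∈ S, c p = 0)
    (h1 : ∀ c c' : E → ZMod 2, (∀ v ∈ BD, fc A J S c v = 0) → (∀ v ∈ BD, fc A J S c' v = 0) →
      (∀ p ∈ S, c p = 0) ∨ (∀ p ∈ S, c' p = 0) ∨ (∀ p ∈ S, c p - c' p = 0)) :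
    S.card ≤ BD.card + r := by
  have fact2 : Fact (Nat.Prime 2) := ⟨Nat.prime_two⟩
  let ex : (S → ZMod 2) →ₗ[ZMod 2] (E → ZMod 2) :=
    { toFun := fun c p => if hp : p ∈ S then c ⟨p, hp⟩ else 0
      map_add' := by intro a b; ext p; by_cases hp : p ∈ S <;> simp [hp]
      map_smul' := by intro a b; ext p; by_cases hp : p ∈ S <;> simp [hp] }
  have hex : ∀ c (p : S), ex c p.1 = c p := by intro c p; simp [ex]
  let Φ : (S → ZMod 2) →ₗ[ZMod 2] (BD → ZMod 2) :=
    { toFun := fun c v => fc A J S (ex c) v.1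
      map_add' := by
        intro a b; ext v
        simp only [fc, map_add, Pi.add_apply, Finset.sum_add_distrib]
      map_smul' := by
        intro a b; ext v
        simp only [fc, map_smul, Pi.smul_apply, smul_eq_mul, Finset.mul_sum, RingHom.id_apply] }
  have hker : ∀ c : S → ZMod 2, Φ c = 0 → ∀ v ∈ BD, fc A J S (ex c) v = 0 := by
    intro c hc v hv
    exact congrFun hc ⟨v, hv⟩
  have hz : ∀ c : S → ZMod 2, (∀ p ∈ S, ex c p = 0) → c = 0 := by
    intro c hc; ext p; exact (hex c p).symm.trans (hc p.1 p.2)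
  have hrk := LinearMap.finrank_range_add_finrank_ker Φ
  have hle : Module.finrank (ZMod 2) (LinearMap.range Φ) ≤ BD.card := by
    have := Submodule.finrank_le (LinearMap.range Φ)
    simpa using this
  have hk : Module.finrank (ZMod 2) (LinearMap.ker Φ) ≤ r := by
    rcases Nat.le_one_iff_eq_zero_or_eq_one.1 hr with h | h
    · have : LinearMap.ker Φ = ⊥ := by
        rw [LinearMap.ker_eq_bot']
        intro c hc
        exact hz c (h0 h _ (hker c hc))
      rw [this]; simp
    · rw [h]
      by_cases hb : LinearMap.ker Φ = ⊥
      · rw [hb]; simp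
      obtain ⟨b, hb1, hb2⟩ := Submodule.exists_mem_ne_zero_of_ne_bot hb
      apply finrank_le_one (⟨b, hb1⟩ : LinearMap.ker Φ)
      rintro ⟨c, hc⟩
      rcases h1 (ex c) (ex b) (hker c hc) (hker b hb1) with h | h | h
      · exact ⟨0, by rw [zero_smul]; exact Subtype.ext (hz c h).symm⟩
      · exact absurd (hz b h) hb2
      · refine ⟨1, ?_⟩
        rw [one_smul]
        apply Subtype.ext
        have : c - b = 0 := hz _ (by intro p hp; rw [map_sub]; exact h p hp)
        exact (sub_eq_zero.1 this).symm
  have hS : Module.finrank (ZMod 2) (S → ZMod 2) = S.card := by simp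
  omega

/-- First counting theorem. -/
theorem count1 {A : Arr E ι X} (hcard : Fintype.card ι = Module.finrank ℝ E)
    (hgen : ∀ y, Gen A ⊤ univ y) (hco : Coer A ⊤ univ) {S : Finset E}
    (hS : ∀ p, p ∈ S ↔ p ∈ Pt A univ Set.univ) :
    S.card ≤ (univ.filter fun v : ι → X => (Reg A univ Set.univ v).Nonempty ∧
      Bornology.IsBounded (Reg A univ Set.univ v)).card + 1 := by
  have hA : (Aff (⊤ : Submodule ℝ E) 0) = Set.univ := by ext y; simp [Aff]
  have key := kp_all A (Module.finrank ℝ E) ⊤ univ 0 S (by simp) (by simpa using hcard)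
    (fun y _ => hgen y) hco (by rw [hA]; exact hS)
  rw [hA] at key
  have conv : ∀ c : E → ZMod 2, (∀ v ∈ (univ.filter fun v : ι → X =>
      (Reg A univ Set.univ v).Nonempty ∧
      Bornology.IsBounded (Reg A univ Set.univ v)), fc A univ S c v = 0) → ∀ v,
      Bornology.IsBounded (Reg A univ Set.univ v) → fc A univ S c v = 0 := by
    intro c h v hv
    rcases (Reg A univ Set.univ v).eq_empty_or_nonempty with he | hne
    · exact fc_empty hS he
    · exact h v (by simp [hne, hv])
  refine count_of_ker (A := A) (J := univ) _ 1 le_rfl (by simp) fun c c' h h' => ?_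
  exact key c c' (fun _ => conv c h) (fun _ => conv c' h')

end Engine6
end Sop

namespace Sop
open Filter Topology
open scoped Classical
set_option linter.unusedSectionVars false

section Engine7

variable {E : Type*} [NormedAddCommGroup E] [InnerProductSpace ℝ E] [FiniteDimensional ℝ E]
variable {ι X : Type*} [Fintype ι] [Fintype X] [Nonempty X]

/-- the locus where both `f k` and `g k` are active, for all `k ∈ K` -/
def Tie (A : Arr E ι X) (K : Finset ι) (f g : ι → X) : Set E :=
  {y | ∀ k ∈ K, A.Act k (f k) y ∧ A.Act k (g k) y}

def tieMap (A : Arr E ι X) (K : Finset ι) (f g : ι → X) : E →ₗ[ℝ] (K → ℝ) :=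
  LinearMap.pi fun k => A.a k.1 (f k.1) - A.a k.1 (g k.1)

lemma mem_ker_tieMap {A : Arr E ι X} {K : Finset ι} {f g : ι → X} {u : E} :
    u ∈ LinearMap.ker (tieMap A K f g) ↔ ∀ k ∈ K, A.a k (f k) u = A.a k (g k) u := by
  rw [LinearMap.mem_ker]
  constructor
  · intro h k hk
    have := congrFun h ⟨k, hk⟩
    exact sub_eq_zero.1 this
  · intro h
    ext ⟨k, hk⟩
    exact sub_eq_zero.2 (h k hk)

lemma Tie.closed (A : Arr E ι X) (K : Finset ι) (f g : ι → X) : IsClosed (Tie A K f g) := by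
  have : Tie A K f g = ⋂ k ∈ K, ({y | A.Act k (f k) y} ∩ {y | A.Act k (g k) y}) := by
    ext y; simp [Tie]
  rw [this]
  exact isClosed_biInter fun k _ => (A.act_closed k _).inter (A.act_closed k _)

lemma Tie.conv (A : Arr E ι X) (K : Finset ι) (f g : ι → X) : Convex ℝ (Tie A K f g) := by
  have : Tie A K f g = ⋂ k ∈ K, ({y | A.Act k (f k) y} ∩ {y | A.Act k (g k) y}) := by
    ext y; simp [Tie]
  rw [this]
  exact convex_iInter fun k => convex_iInter fun _ => (A.act_convex k _).inter (A.act_convex k _)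

lemma pt_tie {A : Arr E ι X} {K : Finset ι} {f g : ι → X} (hfg : ∀ k ∈ K, f k ≠ g k) {p : E}
    (hp : p ∈ Pt A Kᶜ (Tie A K f g)) : p ∈ Pt A univ Set.univ := by
  refine ⟨trivial, fun i _ => ?_⟩
  by_cases hi : i ∈ K
  · exact ⟨f i, g i, hfg i hi, (hp.1 i hi).1, (hp.1 i hi).2⟩
  · exact hp.2 i (by simpa using hi)

lemma pt_two {A : Arr E ι X} (hcard : Fintype.card ι = Module.finrank ℝ E)
    (hgen : ∀ y, Gen A ⊤ univ y) {p : E} (hp : p ∈ Pt A univ Set.univ) {i : ι} {x x' x'' : X}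
    (hne : x ≠ x') (h : A.Act i x p) (h' : A.Act i x' p) (h'' : A.Act i x'' p) :
    x'' = x ∨ x'' = x' := by
  obtain ⟨f, g, hfg⟩ := pt_pair hp
  have := (hgen p).two (by simpa using hcard) (p := Function.update f i x)
    (q := Function.update g i x') (by
      intro k hk
      by_cases hki : k = i
      · subst hki; simp [hne, h, h']
      · simpa [hki] using hfg k hk) (mem_univ i) h''
  simpa using this

lemma Tie.good {A : Arr E ι X} (hcard : Fintype.card ι = Module.finrank ℝ E)
    (hgen : ∀ y, Gen A ⊤ univ y) {K : Finset ι} {f g : ι → X} (hfg : ∀ k ∈ K, f k ≠ g k)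
    (hne : (Tie A K f g).Nonempty) :
    Good A (LinearMap.ker (tieMap A K f g)) Kᶜ (Tie A K f g) where
  closed := Tie.closed A K f g
  conv := Tie.conv A K f g
  sub := by
    intro y hy y' hy'
    rw [mem_ker_tieMap]
    intro k hk
    rw [A.l_sub, A.l_sub, A.act_eq (hy k hk).1 (hy k hk).2, A.act_eq (hy' k hk).1 (hy' k hk).2]
  gen := by
    intro y hy
    apply gen_of_primal
    intro τ
    obtain ⟨u, -, s, hs⟩ := (hgen y).primal (fun i x => if i ∈ K then 0 else τ i x)
    refine ⟨u, ?_, s, ?_⟩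
    · rw [mem_ker_tieMap]
      intro k hk
      rw [hs k (mem_univ _) _ (hy k hk).1, hs k (mem_univ _) _ (hy k hk).2]
      simp [hk]
    · intro i hi x hx
      rw [hs i (mem_univ _) x hx]
      simp [mem_compl.1 hi]
  card := by
    obtain ⟨y, hy⟩ := hne
    have hs : LinearMap.range (tieMap A K f g) = ⊤ := by
      rw [LinearMap.range_eq_top]
      intro τ
      obtain ⟨u, -, hu⟩ := ((hgen y).mono (Finset.subset_univ K)).surj (p := f) (q := g)
        (fun k hk => ⟨hfg k hk, (hy k hk).1, (hy k hk).2⟩)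
        (fun i => if hi : i ∈ K then τ ⟨i, hi⟩ else 0)
      refine ⟨u, ?_⟩
      ext ⟨k, hk⟩
      have := hu k hk
      simp only [hk, dif_pos] at this
      exact this
    have := LinearMap.finrank_range_add_finrank_ker (tieMap A K f g)
    rw [hs, finrank_top, ← hcard] at this
    have h2 : Module.finrank ℝ (K → ℝ) = K.card := by simp
    rw [Finset.card_compl]
    omega
  loc := by
    intro p hp u hu
    rw [mem_ker_tieMap] at hu
    have hpt := pt_tie hfg hp
    have h1 : ∀ k ∈ K, ∀ x, A.Act k x p → A.a k x u = A.a k (f k) u := by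
      intro k hk x hx
      rcases pt_two hcard hgen hpt (hfg k hk) (hp.1 k hk).1 (hp.1 k hk).2 hx with h | h
      · rw [h]
      · rw [h, hu k hk]
    have h2 : ∀ k ∈ K, ∀ᶠ t in 𝓝[>] (0:ℝ), A.Act k (f k) (p + t • u) ∧ A.Act k (g k) (p + t • u) :=
      fun k hk => (A.act_persist (hp.1 k hk).1 fun x hx => (h1 k hk x hx).le).and
        (A.act_persist (hp.1 k hk).2 fun x hx => by rw [h1 k hk x hx, hu k hk])
    exact (Finset.eventually_all K).2 h2

/-- Second counting theorem. -/
theorem count2 {A : Arr E ι X} (hcard : Fintype.card ι = Module.finrank ℝ E)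
    (hgen : ∀ y, Gen A ⊤ univ y) (hco : Coer A ⊤ univ) {K : Finset ι} (hK : K.Nonempty)
    {f g : ι → X} (hfg : ∀ k ∈ K, f k ≠ g k) {S : Finset E}
    (hS : ∀ p, p ∈ S ↔ p ∈ Pt A Kᶜ (Tie A K f g)) :
    S.card ≤ (univ.filter fun v : ι → X => (∀ k ∈ K, v k = f k) ∧
      (Reg A Kᶜ (Tie A K f g) v).Nonempty ∧
      Bornology.IsBounded (Reg A Kᶜ (Tie A K f g) v)).card := by
  set D := Tie A K f g with hD
  rcases D.eq_empty_or_nonempty with hDe | hDn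
  · have : S = ∅ := by
      ext p
      simp only [hS, Finset.notMem_empty, iff_false]
      intro hp
      have := hp.1
      rw [hDe] at this
      exact this
    rw [this]; simp
  have G : Good A (LinearMap.ker (tieMap A K f g)) Kᶜ D := Tie.good hcard hgen hfg hDn
  obtain ⟨k0, hk0⟩ := hK
  set ξ := xi A k0 (f k0) with hξ
  have main : ∀ c : E → ZMod 2, (∀ v ∈ (univ.filter fun v : ι → X => (∀ k ∈ K, v k = f k) ∧
      (Reg A Kᶜ D v).Nonempty ∧ Bornology.IsBounded (Reg A Kᶜ D v)), fc A Kᶜ S c v = 0) →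
      ∀ p ∈ S, c p = 0 := by
    intro c hc
    have hbd : ∀ v, Bornology.IsBounded (Reg A Kᶜ D v) → fc A Kᶜ S c v = 0 := by
      intro v hv
      rcases (Reg A Kᶜ D v).eq_empty_or_nonempty with he | hne
      · exact fc_empty hS he
      let v' : ι → X := fun i => if i ∈ K then f i else v i
      have hv' : ∀ i ∈ Kᶜ, v i = v' i := fun i hi => by simp [v', mem_compl.1 hi]
      have hR : Reg A Kᶜ D v' = Reg A Kᶜ D v := by
        ext y
        exact and_congr_right fun _ => forall₂_congr fun i hi => by rw [hv' i hi]
      rw [fc_congr hv']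
      apply hc
      rw [mem_filter]
      exact ⟨mem_univ _, fun k hk => by simp [v', hk], by rw [hR]; exact hne, by rw [hR]; exact hv⟩
    have hray : ∀ v, ∀ y ∈ Reg A Kᶜ D v, ¬ Bornology.IsBounded (Reg A Kᶜ D v) →
        ∃ u, 0 < ξ u ∧ ∀ t : ℝ, 0 ≤ t → y + t • u ∈ Reg A Kᶜ D v := by
      intro v y hy hb
      obtain ⟨u, hu0, hu⟩ := rec_dir (Reg.closed A _ G.closed v) (Reg.conv A _ G.conv v) hy hb
      refine ⟨u, xi_pos (fun x => A.ray_le (fun t ht => ((hu t ht).1 k0 hk0).1) x)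
        (hco k0 (mem_univ _) u trivial hu0), hu⟩
    apply G.ind hS
    by_cases hξ0 : ∃ u, ξ u ≠ 0
    swap
    · push Not at hξ0
      intro v
      by_cases hb : Bornology.IsBounded (Reg A Kᶜ D v)
      · exact hbd v hb
      rcases (Reg A Kᶜ D v).eq_empty_or_nonempty with he | ⟨y, hy⟩
      · exact fc_empty hS he
      obtain ⟨u, hu, -⟩ := hray v y hy hb
      exact absurd (hξ0 u) hu.ne'
    obtain ⟨u0, hu0⟩ := hξ0
    obtain ⟨B, hB⟩ := thr A D ξ
    obtain ⟨C, hBC, hCF⟩ := exists_big (slice_fin (A := A) (J := univ) (W := ⊤) (D := Set.univ)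
      (fun _ _ _ _ => trivial) (fun y _ => hgen y) ξ) B
    have hDc : IsClosed (D ∩ {y | ξ y = C}) := G.closed.inter
      (isClosed_eq (LinearMap.continuous_of_finiteDimensional ξ) continuous_const)
    have hDv : Convex ℝ (D ∩ {y | ξ y = C}) := G.conv.inter (convex_hyperplane ξ.isLinear C)
    refine elim (A := A) (J := Kᶜ) hDc hDv 0 (fun v => fc A Kᶜ S c v) ?_
      (fun v i hi => G.cyc hS c v hi) ?_
    · intro v hv
      by_cases hb : Bornology.IsBounded (Reg A Kᶜ D v)
      · exact hbd v hb
      rcases (Reg A Kᶜ D v).eq_empty_or_nonempty with he | hne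
      · exact fc_empty hS he
      exfalso
      rw [reg_eq_cell] at hne
      obtain ⟨y, hy, hyB⟩ := (hB _).2 hne
      rw [← reg_eq_cell] at hy
      obtain ⟨u, hu, hru⟩ := hray v y hy hb
      have h1 := hru ((C - ξ y) / ξ u) (div_nonneg (by linarith) hu.le)
      have h2 : y + ((C - ξ y) / ξ u) • u ∈ Reg A Kᶜ (D ∩ {y | ξ y = C}) v := by
        refine ⟨⟨h1.1, ?_⟩, h1.2⟩
        show ξ _ = C
        rw [map_add, map_smul, smul_eq_mul, div_mul_cancel₀ _ hu.ne']; ring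
      rw [hv] at h2
      exact h2
    · intro v q _ _ hq
      exfalso
      have hq' : q ∈ Pt A Kᶜ D := ⟨hq.1.1, hq.2⟩
      have hqg : Gen A (⊤ ⊓ LinearMap.ker ξ) univ q := by
        by_contra hcon
        exact hCF ⟨q, trivial, hq.1.2, hcon⟩
      refine card_lt_of_two hqg ?_ (pt_tie hfg hq').2
      have := finrank_slice (W := ⊤) (ξ := ξ) (u := u0) trivial hu0
      rw [finrank_top] at this
      rw [Finset.card_univ]
      omega
  have := count_of_ker (A := A) (J := Kᶜ) (S := S) _ 0 zero_le_one (fun _ => main)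
    (fun c c' h _ => Or.inl (main c h))
  simpa using this

end Engine7
end Sop

namespace Sop
open Filter Topology
open scoped Classical
set_option linter.unusedSectionVars false

section Geo8

/-- unified counting theorem -/
theorem count {E : Type*} [NormedAddCommGroup E] [InnerProductSpace ℝ E] [FiniteDimensional ℝ E]
    {ι X : Type*} [Fintype ι] [Fintype X] [Nonempty X]
    {A : Arr E ι X} (hcard : Fintype.card ι = Module.finrank ℝ E)
    (hgen : ∀ y, Gen A ⊤ univ y) (hco : Coer A ⊤ univ) (K : Finset ι)
    {f g : ι → X} (hfg : ∀ k ∈ K, f k ≠ g k) {S : Finset E}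
    (hS : ∀ p, p ∈ S ↔ p ∈ Pt A Kᶜ (Tie A K f g)) :
    S.card ≤ (univ.filter fun v : ι → X => (∀ k ∈ K, v k = f k) ∧
      (Reg A Kᶜ (Tie A K f g) v).Nonempty ∧
      Bornology.IsBounded (Reg A Kᶜ (Tie A K f g) v)).card + if K = ∅ then 1 else 0 := by
  rcases K.eq_empty_or_nonempty with rfl | hK
  · have hT : Tie A ∅ f g = Set.univ := by ext y; simp [Tie]
    have := count1 hcard hgen hco (S := S) (by simpa [hT] using hS)
    simpa [hT] using this
  · have := count2 hcard hgen hco hK hfg hS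
    simpa [hK.ne_empty] using this

abbrev EE (n : ℕ) := EuclideanSpace ℝ (Fin n)

/-- the pairing -/
noncomputable def pr {n : ℕ} : (Fin n → ℝ) →ₗ[ℝ] (EE n →ₗ[ℝ] ℝ) :=
  LinearMap.mk₂ ℝ (fun m y => ∑ j, m j * y j)
    (by intro a b c; simp [add_mul, Finset.sum_add_distrib])
    (by intro a b c; simp [Finset.mul_sum, mul_assoc])
    (by intro a b c; simp [mul_add, Finset.sum_add_distrib])
    (by intro a b c; simp [Finset.mul_sum, mul_left_comm])

lemma pr_apply {n : ℕ} (m : Fin n → ℝ) (y : EE n) : pr m y = ∑ j, m j * y j := rfl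

lemma pr_flip_ne {n : ℕ} {u : EE n} (hu : u ≠ 0) : (pr.flip u : (Fin n → ℝ) →ₗ[ℝ] ℝ) ≠ 0 := by
  intro h
  apply hu
  ext j
  have := LinearMap.congr_fun h (Pi.single j 1)
  rw [LinearMap.flip_apply, pr_apply] at this
  simpa [Pi.single_apply] using this

lemma pr_repr {n : ℕ} (φ : (Fin n → ℝ) →ₗ[ℝ] ℝ) : ∃ u : EE n, ∀ m, φ m = pr m u := by
  refine ⟨WithLp.toLp 2 (fun j => φ (Pi.single j 1)), fun m => ?_⟩
  rw [LinearMap.pi_apply_eq_sum_univ φ m, pr_apply]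
  refine Finset.sum_congr rfl fun j _ => ?_
  rw [smul_eq_mul]
  congr 2
  ext k; simp [Pi.single_apply, eq_comm]

lemma null_hyp {n : ℕ} {u : EE n} (hu : u ≠ 0) (c : ℝ) :
    volume {m : Fin n → ℝ | pr m u = c} = 0 := by
  rcases Set.eq_empty_or_nonempty {m : Fin n → ℝ | pr m u = c} with h | ⟨m0, hm0⟩
  · rw [h]; simp
  have hk : LinearMap.ker (pr.flip u : (Fin n → ℝ) →ₗ[ℝ] ℝ) ≠ ⊤ := by
    intro h
    exact pr_flip_ne hu (LinearMap.ker_eq_top.1 h)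
  have h0 := Measure.addHaar_submodule volume _ hk
  have : {m : Fin n → ℝ | pr m u = c} = (fun m => -m0 + m) ⁻¹'
      (LinearMap.ker (pr.flip u : (Fin n → ℝ) →ₗ[ℝ] ℝ) : Set (Fin n → ℝ)) := by
    ext m
    have h1 : pr m0 u = c := hm0
    simp only [Set.mem_ofPred_eq, Set.mem_preimage, SetLike.mem_coe, LinearMap.mem_ker,
      LinearMap.flip_apply, map_add, map_neg, LinearMap.add_apply, LinearMap.neg_apply]
    constructor <;> intro h <;> linarith
  rw [this, measure_preimage_add, h0]

variable {n : ℕ} {X : Type*} [Fintype X] [Nonempty X]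

noncomputable def arr (pt : Fin n → X → Fin n → ℝ) (ω : Fin n → X → ℝ) : Arr (EE n) (Fin n) X :=
  ⟨fun i x => pr (pt i x), ω⟩

lemma exists_gen (pt : Fin n → X → Fin n → ℝ) :
    ∃ ω : Fin n → X → ℝ, ∀ y, Gen (arr pt ω) ⊤ univ y := by
  let Q : (Fin n → Finset X) → (Fin n → X → ℝ) → Prop := fun τ μ =>
    μ ≠ 0 ∧ (∀ i, ∑ x, μ i x = 0) ∧ (∀ i x, μ i x ≠ 0 → x ∈ τ i) ∧
      ∀ u, ∑ i, ∑ x, μ i x * pr (pt i x) u = 0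
  let M : (Fin n → Finset X) → (Fin n → X → ℝ) := fun τ => if h : ∃ μ, Q τ μ then h.choose else 0
  have hM : ∀ τ, (∃ μ, Q τ μ) → Q τ (M τ) := by
    intro τ h
    simp only [M, dif_pos h]
    exact h.choose_spec
  let F : (Fin n → X → ℝ) → ((Fin n → X → ℝ) →ₗ[ℝ] ℝ) := fun μ =>
    { toFun := fun ω => ∑ i, ∑ x, μ i x * ω i x
      map_add' := by intro a b; simp [mul_add, Finset.sum_add_distrib]
      map_smul' := by intro a b; simp [Finset.mul_sum, mul_left_comm] }
  have hF : ∀ μ, μ ≠ 0 → F μ ≠ 0 := by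
    intro μ hμ h
    apply hμ
    have h1 : ∑ i, ∑ x, μ i x * μ i x = 0 := LinearMap.congr_fun h μ
    ext i x
    have h2 := (Finset.sum_eq_zero_iff_of_nonneg (fun i _ => Finset.sum_nonneg
      fun x _ => mul_self_nonneg (μ i x))).1 h1 i (mem_univ i)
    have h3 := (Finset.sum_eq_zero_iff_of_nonneg (fun x _ => mul_self_nonneg (μ i x))).1 h2 x
      (mem_univ x)
    simpa using h3
  obtain ⟨ω, hω⟩ := avoid (V := Fin n → X → ℝ)
    ((univ.filter fun τ => ∃ μ, Q τ μ).image fun τ => (F (M τ), (0:ℝ))) (by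
      intro k hk
      obtain ⟨τ, hτ, rfl⟩ := mem_image.1 hk
      exact hF _ (hM τ (mem_filter.1 hτ).2).1)
  refine ⟨ω, fun y μ h1 h2 h3 => ?_⟩
  by_contra hμ
  let τ : Fin n → Finset X := fun i => univ.filter fun x => (arr pt ω).Act i x y
  have hQ : ∃ μ, Q τ μ := ⟨μ, hμ, h1, fun i x hx => by simp [τ, (h2 i x hx).2],
    fun u => h3 u trivial⟩
  obtain ⟨q1, q2, q3, q4⟩ := hM τ hQ
  apply hω _ (mem_image_of_mem _ (mem_filter.2 ⟨mem_univ τ, hQ⟩))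
  show ∑ i, ∑ x, M τ i x * ω i x = 0
  have key : ∑ i, ∑ x, M τ i x * (arr pt ω).l i x y = 0 := by
    apply Finset.sum_eq_zero
    intro i _
    obtain ⟨x0, hx0⟩ := (arr pt ω).exists_act i y
    have : ∑ x, M τ i x * (arr pt ω).l i x y = ∑ x, M τ i x * (arr pt ω).l i x0 y := by
      refine Finset.sum_congr rfl fun x _ => ?_
      by_cases hx : M τ i x = 0
      · rw [hx, zero_mul, zero_mul]
      · have := q3 i x hx
        simp only [τ, mem_filter, mem_univ, true_and] at this
        rw [(arr pt ω).act_eq this hx0]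
    rw [this, ← Finset.sum_mul, q2, zero_mul]
  have h4 := q4 y
  have : ∑ i, ∑ x, M τ i x * (arr pt ω).l i x y =
      ∑ i, ∑ x, M τ i x * pr (pt i x) y + ∑ i, ∑ x, M τ i x * ω i x := by
    simp only [Arr.l, arr, mul_add, Finset.sum_add_distrib]
  rw [this, h4, zero_add] at key
  exact key

end Geo8
end Sop

namespace Sop
open Filter Topology
open scoped Classical
set_option linter.unusedSectionVars false

section Geo9

variable {n : ℕ} {X : Type*} [Fintype X] [Nonempty X]

/-- Minkowski sums of hulls of labelled points. -/
def MS (pt : Fin n → X → Fin n → ℝ) (B : Fin n → Set X) (I : Finset (Fin n)) : Set (Fin n → ℝ) :=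
  ∑ i ∈ I, convexHull ℝ (pt i '' B i)

variable {pt : Fin n → X → Fin n → ℝ}

lemma MS.conv (B : Fin n → Set X) (I : Finset (Fin n)) : Convex ℝ (MS pt B I) :=
  convex_sum _ fun _ _ => convex_convexHull _ _

lemma MS.compact (B : Fin n → Set X) (I : Finset (Fin n)) : IsCompact (MS pt B I) := by
  unfold MS
  induction I using Finset.induction_on with
  | empty => simp
  | insert i I hi ih =>
    rw [Finset.sum_insert hi]
    exact (Set.Finite.isCompact_convexHull (𝕜 := ℝ) (Set.toFinite _)).add ih

lemma MS.mono {B B' : Fin n → Set X} (h : ∀ i, B i ⊆ B' i) (I : Finset (Fin n)) :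
    MS pt B I ⊆ MS pt B' I := by
  intro m hm
  unfold MS at hm ⊢
  rw [Set.mem_finsetSum] at hm ⊢
  obtain ⟨g, hg, rfl⟩ := hm
  exact ⟨g, fun {i} hi => convexHull_mono (Set.image_mono (h i)) (hg hi), rfl⟩

lemma MS.mem_sum {B : Fin n → Set X} {I : Finset (Fin n)} {m : Fin n → Fin n → ℝ}
    (hm : ∀ i ∈ I, m i ∈ convexHull ℝ (pt i '' B i)) : ∑ i ∈ I, m i ∈ MS pt B I := by
  unfold MS
  rw [Set.mem_finsetSum]
  exact ⟨m, fun {i} hi => hm i hi, rfl⟩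

lemma MS.le {B : Fin n → Set X} {I : Finset (Fin n)} {u : EE n} {c : Fin n → ℝ}
    (h : ∀ i ∈ I, ∀ x ∈ B i, pr (pt i x) u ≤ c i) {m : Fin n → ℝ} (hm : m ∈ MS pt B I) :
    pr m u ≤ ∑ i ∈ I, c i := by
  unfold MS at hm
  rw [Set.mem_finsetSum] at hm
  obtain ⟨g, hg, rfl⟩ := hm
  rw [map_sum, LinearMap.sum_apply]
  refine Finset.sum_le_sum fun i hi => ?_
  have : convexHull ℝ (pt i '' B i) ⊆ {m | (pr.flip u) m ≤ c i} := by
    apply convexHull_min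
    · rintro _ ⟨x, hx, rfl⟩
      exact h i hi x hx
    · exact convex_halfSpace_le (pr.flip u).isLinear _
  exact this (hg hi)

lemma MS.eq {B : Fin n → Set X} {I : Finset (Fin n)} {u : EE n} {c : Fin n → ℝ}
    (h : ∀ i ∈ I, ∀ x ∈ B i, pr (pt i x) u = c i) {m : Fin n → ℝ} (hm : m ∈ MS pt B I) :
    pr m u = ∑ i ∈ I, c i := by
  apply le_antisymm (MS.le (fun i hi x hx => (h i hi x hx).le) hm)
  have := MS.le (u := -u) (c := fun i => - c i) (fun i hi x hx => by
    rw [map_neg, h i hi x hx]) hm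
  rw [map_neg, Finset.sum_neg_distrib] at this
  linarith

lemma MS.null {B : Fin n → Set X} {I : Finset (Fin n)} {u : EE n} (hu : u ≠ 0)
    (h : ∀ i ∈ I, ∀ x ∈ B i, ∀ x' ∈ B i, pr (pt i x) u = pr (pt i x') u) :
    volume (MS pt B I) = 0 := by
  have : ∀ i, ∃ c, i ∈ I → ∀ x ∈ B i, pr (pt i x) u = c := by
    intro i
    by_cases hi : ∃ x, x ∈ B i
    · obtain ⟨x, hx⟩ := hi
      exact ⟨pr (pt i x) u, fun hI x' hx' => h i hI x' hx' x hx⟩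
    · exact ⟨0, fun _ x hx => absurd ⟨x, hx⟩ hi⟩
  choose c hc using this
  refine measure_mono_null (fun m hm => ?_) (null_hyp hu (∑ i ∈ I, c i))
  exact MS.eq (fun i hi => hc i hi) hm

variable {ω : Fin n → X → ℝ}

/-- the set of active labels -/
def ac (pt : Fin n → X → Fin n → ℝ) (ω : Fin n → X → ℝ) (y : EE n) (i : Fin n) : Set X :=
  {x | (arr pt ω).Act i x y}

noncomputable def hh (pt : Fin n → X → Fin n → ℝ) (ω : Fin n → X → ℝ) (i : Fin n) (y : EE n) : ℝ :=
  univ.sup' univ_nonempty fun x => (arr pt ω).l i x y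

lemma le_hh (i : Fin n) (x : X) (y : EE n) : (arr pt ω).l i x y ≤ hh pt ω i y :=
  Finset.le_sup' (fun x => (arr pt ω).l i x y) (mem_univ x)

lemma hh_eq {i : Fin n} {x : X} {y : EE n} (h : (arr pt ω).Act i x y) :
    hh pt ω i y = (arr pt ω).l i x y :=
  le_antisymm (Finset.sup'_le _ _ fun w _ => h w) (le_hh i x y)

lemma hh_cont (i : Fin n) : Continuous (hh pt ω i) :=
  Continuous.finset_sup'_apply univ_nonempty fun x _ => (arr pt ω).l_cont i x

lemma MS.sub_le {I : Finset (Fin n)} {y : EE n} {m : Fin n → ℝ} (hm : m ∈ MS pt (ac pt ω y) I)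
    (z : EE n) : pr m (z - y) ≤ ∑ i ∈ I, (hh pt ω i z - hh pt ω i y) := by
  refine MS.le (fun i _ x hx => ?_) hm
  have h1 : pr (pt i x) (z - y) = _ := (arr pt ω).l_sub i x y z
  rw [h1, hh_eq hx]
  linarith [le_hh (pt := pt) (ω := ω) i x z]

lemma MS.coercive {I : Finset (Fin n)} {m : Fin n → ℝ}
    (hm : m ∈ interior (MS pt (fun _ => Set.univ) I)) :
    Tendsto (fun y => ∑ i ∈ I, hh pt ω i y - pr m y) (cocompact (EE n)) atTop := by
  obtain ⟨ε, hε, hb⟩ := Metric.mem_nhds_iff.1 (mem_interior_iff_mem_nhds.1 hm)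
  set C := ∑ i ∈ I, ∑ x, |ω i x| with hC
  have key : ∀ y : EE n, (ε / 2) * ‖y‖ - C ≤ ∑ i ∈ I, hh pt ω i y - pr m y := by
    intro y
    let s : Fin n → ℝ := fun j => SignType.sign (y j)
    have hs : pr s y = ∑ j, |y j| := by
      rw [pr_apply]
      exact Finset.sum_congr rfl fun j _ => sign_mul_self _
    have hmem : m + (ε / 2) • s ∈ MS pt (fun _ => Set.univ) I := by
      apply hb
      rw [Metric.mem_ball, dist_eq_norm, add_sub_cancel_left, norm_smul, Real.norm_eq_abs,
        abs_of_pos (half_pos hε)]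
      have : ‖s‖ ≤ 1 := by
        rw [pi_norm_le_iff_of_nonneg zero_le_one]
        intro j
        simp only [s]
        rcases lt_trichotomy (y j) 0 with h | h | h <;> simp [h]
      nlinarith
    have h1 := MS.le (u := y) (c := fun i => hh pt ω i y + ∑ x, |ω i x|) (fun i _ x _ => by
      have e1 := le_hh (pt := pt) (ω := ω) i x y
      have e2 : (arr pt ω).l i x y = pr (pt i x) y + ω i x := rfl
      have e3 : |ω i x| ≤ ∑ x, |ω i x| :=
        Finset.single_le_sum (f := fun x => |ω i x|) (fun x _ => abs_nonneg _) (mem_univ x)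
      have e4 := neg_abs_le (ω i x)
      linarith) hmem
    rw [map_add, map_smul, LinearMap.add_apply, LinearMap.smul_apply, hs, smul_eq_mul,
      Finset.sum_add_distrib] at h1
    have h2 : ‖y‖ ≤ ∑ j, |y j| := by
      have e : y = ∑ j, EuclideanSpace.single j (y j) := by
        ext k; simp
      calc ‖y‖ = ‖∑ j, EuclideanSpace.single j (y j)‖ := by rw [← e]
        _ ≤ ∑ j, ‖EuclideanSpace.single j (y j)‖ := norm_sum_le _ _
        _ = ∑ j, |y j| := by simp
    nlinarith
  refine tendsto_atTop_mono key ?_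
  have := (tendsto_norm_cocompact_atTop (E := EE n)).const_mul_atTop (half_pos hε)
  exact tendsto_atTop_add_const_right _ _ this

lemma MS.cover {I : Finset (Fin n)} {m : Fin n → ℝ}
    (hm : m ∈ interior (MS pt (fun _ => Set.univ) I)) : ∃ y, m ∈ MS pt (ac pt ω y) I := by
  have hcont : Continuous fun y => ∑ i ∈ I, hh pt ω i y - pr m y :=
    (continuous_finsetSum _ fun i _ => hh_cont i).sub
      (LinearMap.continuous_of_finiteDimensional (pr m))
  obtain ⟨y, hy⟩ := hcont.exists_forall_le (MS.coercive hm)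
  refine ⟨y, ?_⟩
  by_contra hcon
  obtain ⟨φ, s, h1, h2⟩ := geometric_hahn_banach_closed_point (MS.conv (ac pt ω y) I)
    (MS.compact (ac pt ω y) I).isClosed hcon
  obtain ⟨u, hu⟩ := pr_repr (φ : (Fin n → ℝ) →ₗ[ℝ] ℝ)
  have hx : ∀ i, ∃ x, (arr pt ω).Act i x y ∧
      ∀ x', (arr pt ω).Act i x' y → pr (pt i x') u ≤ pr (pt i x) u := by
    intro i
    obtain ⟨x0, hx0⟩ := (arr pt ω).exists_act i y
    obtain ⟨x, hx, hmax⟩ := Finset.exists_max_image (univ.filter fun x => (arr pt ω).Act i x y)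
      (fun x => pr (pt i x) u) ⟨x0, by simp [hx0]⟩
    simp only [mem_filter, mem_univ, true_and] at hx hmax
    exact ⟨x, hx, hmax⟩
  choose x hxa hxm using hx
  have hev : ∀ᶠ t in 𝓝[>] (0:ℝ), ∀ i, (arr pt ω).Act i (x i) (y + t • u) :=
    eventually_all.2 fun i => (arr pt ω).act_persist (hxa i) (hxm i)
  obtain ⟨t, ht, ht0⟩ := (hev.and self_mem_nhdsWithin).exists
  have ht0' : (0:ℝ) < t := ht0
  have h3 := h1 _ (MS.mem_sum (pt := pt) (B := ac pt ω y) (I := I) (m := fun i => pt i (x i))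
    (fun i _ => subset_convexHull _ _ ⟨x i, hxa i, rfl⟩))
  have h4 : φ (∑ i ∈ I, pt i (x i)) = ∑ i ∈ I, pr (pt i (x i)) u := by
    have := hu (∑ i ∈ I, pt i (x i))
    rw [map_sum pr, LinearMap.sum_apply] at this
    exact this
  have h5 : φ m = pr m u := hu m
  have h6 := hy (y + t • u)
  have h7 : ∑ i ∈ I, hh pt ω i (y + t • u) = ∑ i ∈ I, hh pt ω i y + t * ∑ i ∈ I, pr (pt i (x i)) u := by
    rw [Finset.mul_sum, ← Finset.sum_add_distrib]
    refine Finset.sum_congr rfl fun i _ => ?_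
    rw [hh_eq (ht i), hh_eq (hxa i), (arr pt ω).l_add_smul]
    rfl
  rw [h7, map_add, map_smul, smul_eq_mul] at h6
  rw [h4] at h3
  rw [h5] at h2
  have : t * ∑ i ∈ I, pr (pt i (x i)) u < t * pr m u :=
    mul_lt_mul_of_pos_left (h3.trans h2) ht0'
  linarith

/-- cells which are points -/
def YY (pt : Fin n → X → Fin n → ℝ) (ω : Fin n → X → ℝ) : Set (EE n) :=
  {y | ∀ u, (∀ i, ∀ x ∈ ac pt ω y i, ∀ x' ∈ ac pt ω y i, pr (pt i x) u = pr (pt i x') u) → u = 0}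

lemma YY.finite : (YY pt ω).Finite := by
  apply Set.Finite.of_injOn (f := fun y => ac pt ω y)
    (t := (Set.univ : Set (Fin n → Set X))) (fun _ _ => Set.mem_univ _) _ (Set.toFinite _)
  intro y hy y' hy' he
  have he' : ac pt ω y = ac pt ω y' := he
  have := hy (y' - y) (fun i x hx x' hx' => by
    have e1 : pr (pt i x) (y' - y) = _ := (arr pt ω).l_sub i x y y'
    have e2 : pr (pt i x') (y' - y) = _ := (arr pt ω).l_sub i x' y y'
    have hx2 := hx
    have hx2' := hx'
    rw [he'] at hx2 hx2'
    rw [e1, e2, (arr pt ω).act_eq hx hx', (arr pt ω).act_eq hx2 hx2'])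
  exact (sub_eq_zero.1 this).symm

lemma MS.vol (I : Finset (Fin n)) :
    volume (MS pt (fun _ => Set.univ) I) =
      ∑ y ∈ (YY.finite (pt := pt) (ω := ω)).toFinset, volume (MS pt (ac pt ω y) I) := by
  set YF := (YY.finite (pt := pt) (ω := ω)).toFinset with hYF
  rw [← measure_biUnion_finset₀]
  · apply le_antisymm
    · let N : Set (Fin n → ℝ) := ⋃ τ ∈ {τ : Fin n → Set X | ∃ u : EE n, u ≠ 0 ∧
        ∀ i, ∀ x ∈ τ i, ∀ x' ∈ τ i, pr (pt i x) u = pr (pt i x') u}, MS pt τ I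
      have hN : volume N = 0 := by
        apply (measure_biUnion_null_iff (Set.to_countable _)).2
        rintro τ ⟨u, hu, h⟩
        exact MS.null hu fun i _ => h i
      have hF := (MS.conv (pt := pt) (fun _ => Set.univ) I).addHaar_frontier volume
      have hsub : MS pt (fun _ => Set.univ) I ⊆ (⋃ y ∈ YF, MS pt (ac pt ω y) I) ∪
          (N ∪ frontier (MS pt (fun _ => Set.univ) I)) := by
        intro m hm
        by_cases hi : m ∈ interior (MS pt (fun _ => Set.univ) I)
        · obtain ⟨y, hy⟩ := MS.cover (ω := ω) hi
          by_cases hyY : y ∈ YY pt ω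
          · left
            simp only [Set.mem_iUnion]
            exact ⟨y, by simpa [hYF] using hyY, hy⟩
          · right; left
            simp only [YY, Set.mem_ofPred_eq] at hyY
            push Not at hyY
            obtain ⟨u, h1, h2⟩ := hyY
            simp only [N, Set.mem_iUnion]
            exact ⟨ac pt ω y, ⟨u, h2, h1⟩, hy⟩
        · right; right
          exact ⟨subset_closure hm, hi⟩
      refine (measure_mono hsub).trans ((measure_union_le _ _).trans ?_)
      have : volume (N ∪ frontier (MS pt (fun _ => Set.univ) I)) = 0 :=
        measure_union_null hN hF
      rw [this, add_zero]
    · apply measure_mono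
      apply Set.iUnion₂_subset
      intro y _
      exact MS.mono (fun i => Set.subset_univ _) I
  · intro y _ y' _ hne
    refine measure_mono_null ?_ (null_hyp (sub_ne_zero.2 hne.symm)
      (∑ i ∈ I, (hh pt ω i y' - hh pt ω i y)))
    rintro m ⟨h1, h2⟩
    have e1 := MS.sub_le h1 y'
    have e2 := MS.sub_le h2 y
    rw [← neg_sub y' y, map_neg] at e2
    have e3 : ∑ i ∈ I, (hh pt ω i y - hh pt ω i y') = - ∑ i ∈ I, (hh pt ω i y' - hh pt ω i y) := by
      rw [← Finset.sum_neg_distrib]; exact Finset.sum_congr rfl fun i _ => by ring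
    show pr m (y' - y) = _
    linarith
  · intro y _
    exact (MS.compact _ I).isClosed.measurableSet.nullMeasurableSet

end Geo9
end Sop

namespace Sop
open Filter Topology
open scoped Classical
set_option linter.unusedSectionVars false

section Geo10

variable {n : ℕ} {X : Type*} [Fintype X] [Nonempty X]

lemma exists_FG (s : Finset X) : ∃ x x' : X, (∃ z z', z ≠ z' ∧ z ∈ s ∧ z' ∈ s) →
    x ≠ x' ∧ x ∈ s ∧ x' ∈ s := by
  by_cases h : ∃ z z', z ≠ z' ∧ z ∈ s ∧ z' ∈ s
  · obtain ⟨z, z', hz⟩ := h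
    exact ⟨z, z', fun _ => hz⟩
  · exact ⟨Classical.arbitrary X, Classical.arbitrary X, fun h' => absurd h' h⟩

/-- two chosen elements of a set of labels -/
noncomputable def FF (s : Finset X) : X := (exists_FG s).choose
noncomputable def GG (s : Finset X) : X := (exists_FG s).choose_spec.choose

lemma FG_spec {s : Finset X} (h : ∃ z z', z ≠ z' ∧ z ∈ s ∧ z' ∈ s) :
    FF s ≠ GG s ∧ FF s ∈ s ∧ GG s ∈ s :=
  (exists_FG s).choose_spec.choose_spec h

noncomputable def acF (pt : Fin n → X → Fin n → ℝ) (ω : Fin n → X → ℝ) (y : EE n) (i : Fin n) :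
    Finset X := univ.filter fun x => (arr pt ω).Act i x y

variable {pt : Fin n → X → Fin n → ℝ} {ω : Fin n → X → ℝ}

lemma mem_acF {y : EE n} {i : Fin n} {x : X} : x ∈ acF pt ω y i ↔ (arr pt ω).Act i x y := by
  simp [acF]

noncomputable def em (pt : Fin n → X → Fin n → ℝ) (s : Fin n → Finset X) :
    Matrix (Fin n) (Fin n) ℝ :=
  Matrix.of fun i j => pt i (FF (s i)) j - pt i (GG (s i)) j

lemma FG_act {p : EE n} (hp : p ∈ Pt (arr pt ω) univ Set.univ) (i : Fin n) :
    FF (acF pt ω p i) ≠ GG (acF pt ω p i) ∧ (arr pt ω).Act i (FF (acF pt ω p i)) p ∧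
      (arr pt ω).Act i (GG (acF pt ω p i)) p := by
  obtain ⟨x, x', h1, h2, h3⟩ := hp.2 i (mem_univ i)
  have := FG_spec (s := acF pt ω p i) ⟨x, x', h1, mem_acF.2 h2, mem_acF.2 h3⟩
  exact ⟨this.1, mem_acF.1 this.2.1, mem_acF.1 this.2.2⟩

lemma acF_eq (hgen : ∀ y, Gen (arr pt ω) ⊤ univ y) {p : EE n}
    (hp : p ∈ Pt (arr pt ω) univ Set.univ) (i : Fin n) :
    acF pt ω p i = {FF (acF pt ω p i), GG (acF pt ω p i)} := by
  obtain ⟨h1, h2, h3⟩ := FG_act hp i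
  ext x
  rw [mem_insert, mem_singleton]
  constructor
  · intro hx
    exact pt_two (by simp) hgen hp h1 h2 h3 (mem_acF.1 hx)
  · rintro (h | h)
    · rw [h]; exact mem_acF.2 h2
    · rw [h]; exact mem_acF.2 h3

lemma MS.eq_box {f g : Fin n → X} {B : Fin n → Set X} (hB : ∀ i, B i = {f i, g i}) :
    MS pt B univ = (fun m => (∑ i, pt i (g i)) + m) ''
      (Matrix.toLin' (Matrix.of fun i j => pt i (f i) j - pt i (g i) j).transpose ''
        Set.Icc (0 : Fin n → ℝ) 1) := by
  have hL : ∀ lam : Fin n → ℝ, Matrix.toLin' (Matrix.of fun i j => pt i (f i) j - pt i (g i) j).transpose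
      lam = ∑ i, lam i • (pt i (f i) - pt i (g i)) := by
    intro lam
    ext j
    simp [Matrix.toLin'_apply, Matrix.mulVec, dotProduct, mul_comm]
  have hseg : ∀ i, convexHull ℝ (pt i '' B i) =
      (fun t : ℝ => pt i (g i) + t • (pt i (f i) - pt i (g i))) '' Set.Icc 0 1 := by
    intro i
    rw [hB, Set.image_pair, Set.pair_comm, convexHull_pair, segment_eq_image']
  ext m
  unfold MS
  rw [Set.mem_finsetSum]
  simp only [hseg]
  constructor
  · rintro ⟨q, hq, rfl⟩
    choose lam h1 h2 using fun i => hq (mem_univ i)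
    refine ⟨_, ⟨lam, ⟨fun i => (h1 i).1, fun i => (h1 i).2⟩, rfl⟩, ?_⟩
    simp only [hL]
    rw [← Finset.sum_add_distrib]
    exact Finset.sum_congr rfl fun i _ => h2 i
  · rintro ⟨_, ⟨lam, ⟨h1, h2⟩, rfl⟩, rfl⟩
    refine ⟨fun i => pt i (g i) + lam i • (pt i (f i) - pt i (g i)), fun {i} _ =>
      ⟨lam i, ⟨h1 i, h2 i⟩, rfl⟩, ?_⟩
    simp only [hL]
    rw [← Finset.sum_add_distrib]

lemma MS.vol_box {f g : Fin n → X} {B : Fin n → Set X} (hB : ∀ i, B i = {f i, g i}) :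
    (volume (MS pt B univ)).toReal =
      |(Matrix.of fun i j => pt i (f i) j - pt i (g i) j).det| := by
  rw [MS.eq_box hB, Set.image_add_left, measure_preimage_add, Measure.addHaar_image_linearMap,
    LinearMap.det_toLin', Matrix.det_transpose, Real.volume_Icc_pi]
  simp

lemma toggle {φ : Finset (Fin n) → ℝ} {i : Fin n} (h : ∀ I, i ∉ I → φ (insert i I) = φ I) :
    ∑ I : Finset (Fin n), (-1 : ℝ) ^ (n - I.card) * φ I = 0 := by
  have hs : ∀ I, i ∉ I → (-1 : ℝ) ^ (n - (insert i I).card) * φ (insert i I) +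
      (-1 : ℝ) ^ (n - I.card) * φ I = 0 := by
    intro I hi
    rw [h I hi, Finset.card_insert_of_notMem hi]
    have : I.card < n := by
      have := Finset.card_lt_univ_of_notMem hi
      simpa using this
    have e : n - I.card = (n - (I.card + 1)) + 1 := by omega
    rw [e, pow_succ]; ring
  apply Finset.sum_involution (fun I _ => if i ∈ I then I.erase i else insert i I)
  · intro I _
    by_cases hi : i ∈ I
    · simp only [hi, if_true]
      have := hs (I.erase i) (by simp)
      rwa [Finset.insert_erase hi] at this
    · simp only [hi, if_false]
      rw [add_comm]; exact hs I hi
  · intro I _ _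
    by_cases hi : i ∈ I
    · simp only [hi, if_true]
      intro he
      have := Finset.notMem_erase i I
      rw [he] at this
      exact this hi
    · simp only [hi, if_false]
      intro he
      exact hi (he ▸ Finset.mem_insert_self i I)
  · intro I _
    by_cases hi : i ∈ I
    · simp [hi, Finset.insert_erase hi]
    · simp [hi, Finset.erase_insert hi]
  · intro I _; simp

theorem mv_formula (hgen : ∀ y, Gen (arr pt ω) ⊤ univ y) {S : Finset (EE n)}
    (hS : ∀ p, p ∈ S ↔ p ∈ Pt (arr pt ω) univ Set.univ) :
    ∑ I : Finset (Fin n), (-1 : ℝ) ^ (n - I.card) * (volume (MS pt (fun _ => Set.univ) I)).toReal =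
      ∑ p ∈ S, |(em pt (acF pt ω p)).det| := by
  have hfin : ∀ B I, volume (MS pt B I) ≠ ⊤ := fun B I => (MS.compact B I).measure_lt_top.ne
  have h1 : ∀ I, (volume (MS pt (fun _ => Set.univ) I)).toReal =
      ∑ y ∈ (YY.finite (pt := pt) (ω := ω)).toFinset, (volume (MS pt (ac pt ω y) I)).toReal := by
    intro I
    rw [MS.vol (ω := ω), ENNReal.toReal_sum fun y _ => hfin _ _]
  simp only [h1, Finset.mul_sum]
  rw [Finset.sum_comm]
  have hsub : S ⊆ (YY.finite (pt := pt) (ω := ω)).toFinset := by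
    intro p hp
    rw [Set.Finite.mem_toFinset]
    intro u hu
    have hp' := (hS p).1 hp
    exact (hgen p).inj (by simp) (p := fun i => FF (acF pt ω p i)) (q := fun i => GG (acF pt ω p i))
      (fun i _ => FG_act hp' i) trivial (fun i _ => hu i _ (FG_act hp' i).2.1 _ (FG_act hp' i).2.2)
  rw [← Finset.sum_subset hsub]
  · refine Finset.sum_congr rfl fun p hp => ?_
    have hp' := (hS p).1 hp
    have hB : ∀ i, ac pt ω p i = {FF (acF pt ω p i), GG (acF pt ω p i)} := by
      intro i
      have := acF_eq hgen hp' i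
      ext x
      have h2 := Finset.ext_iff.1 this x
      rw [mem_acF, mem_insert, mem_singleton] at h2
      exact h2
    rw [Finset.sum_eq_single univ]
    · rw [MS.vol_box hB]
      simp [em]
    · intro I _ hI
      obtain ⟨i0, hi0⟩ : ∃ i0, i0 ∉ I := by
        by_contra hc
        push Not at hc
        exact hI (Finset.eq_univ_iff_forall.2 hc)
      obtain ⟨u, -, hu⟩ := (hgen p).surj (p := fun i => FF (acF pt ω p i))
        (q := fun i => GG (acF pt ω p i)) (fun i _ => FG_act hp' i) (Pi.single i0 1)
      have hu0 : u ≠ 0 := by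
        rintro rfl
        have := hu i0 (mem_univ _)
        simp at this
      rw [MS.null hu0, ENNReal.toReal_zero, mul_zero]
      intro i hi
      have hne : i ≠ i0 := fun h => hi0 (h ▸ hi)
      have h3 := hu i (mem_univ i)
      rw [Pi.single_eq_of_ne hne] at h3
      have h4 : pr (pt i (FF (acF pt ω p i))) u = pr (pt i (GG (acF pt ω p i))) u :=
        sub_eq_zero.1 h3
      rw [hB i]
      rintro x (rfl | rfl) x' (rfl | rfl)
      · rfl
      · exact h4
      · exact h4.symm
      · rfl
    · intro h; exact absurd (mem_univ _) h
  · intro y _ hy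
    obtain ⟨i, hi⟩ : ∃ i, ∀ x x', (arr pt ω).Act i x y → (arr pt ω).Act i x' y → x = x' := by
      by_contra hc
      push Not at hc
      apply hy
      rw [hS]
      refine ⟨trivial, fun i _ => ?_⟩
      obtain ⟨x, x', h1, h2, h3⟩ := hc i
      exact ⟨x, x', h3, h1, h2⟩
    obtain ⟨x0, hx0⟩ := (arr pt ω).exists_act i y
    have hB : ac pt ω y i = {x0} := by
      ext x
      exact ⟨fun hx => hi x x0 hx hx0, fun hx => by rw [Set.mem_singleton_iff] at hx; rw [hx]; exact hx0⟩
    apply toggle (φ := fun I => (volume (MS pt (ac pt ω y) I)).toReal) (i := i)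
    intro I hI
    have : MS pt (ac pt ω y) (insert i I) = (fun m => pt i x0 + m) '' MS pt (ac pt ω y) I := by
      unfold MS
      rw [Finset.sum_insert hI, hB, Set.image_singleton, convexHull_singleton, Set.singleton_add]
    rw [this, Set.image_add_left, measure_preimage_add]

end Geo10
end Sop

namespace Sop
open Filter Topology
open scoped Classical
set_option linter.unusedSectionVars false

lemma lattice_box {n : ℕ} (M : Matrix (Fin n) (Fin n) ℝ) (hM : ∀ i, IsLatticePt (M i)) :
    ∃ Λ : Finset (Fin n → ℝ), (∀ lam ∈ Λ, ∀ i, 0 ≤ lam i ∧ lam i < 1) ∧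
      (∀ lam ∈ Λ, IsLatticePt (Matrix.vecMul lam M)) ∧ |M.det| ≤ Λ.card := by
  by_cases hdet : M.det = 0
  · exact ⟨∅, by simp, by simp, by simp [hdet]⟩
  choose N hN using hM
  have hMN : M = (Matrix.of N).map (Int.castRingHom ℝ) := by
    ext i j; simp [hN]
  have hdN : M.det = ((Matrix.of N).det : ℝ) := by
    rw [hMN]
    exact (RingHom.map_det (Int.castRingHom ℝ) _).symm
  have hN0 : (Matrix.of N).det ≠ 0 := by
    intro h; apply hdet; rw [hdN, h]; simp
  have hcast : ∀ z : Fin n → ℤ, Matrix.vecMul (fun i => (z i : ℝ)) M =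
      fun j => ((Matrix.vecMul z (Matrix.of N) j : ℤ) : ℝ) := by
    intro z
    ext j
    simp [Matrix.vecMul, dotProduct, hN]
  set f := Matrix.vecMulLinear (Matrix.of N) with hf
  have hinj : Function.Injective f := by
    rw [injective_iff_map_eq_zero]
    intro z hz
    exact Matrix.eq_zero_of_vecMul_eq_zero hN0 hz
  set e := LinearEquiv.ofInjective f hinj
  have hcard := Submodule.natAbs_det_equiv (LinearMap.range f) e
  have hcomp : (LinearMap.range f).subtype ∘ₗ AddMonoidHom.toIntLinearMap (e : (Fin n → ℤ) →+ LinearMap.range f) = f := by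
    ext z; rfl
  rw [hcomp] at hcard
  have hfd : LinearMap.det f = (Matrix.of N).det := by
    rw [← Matrix.det_transpose, ← LinearMap.det_toLin']
    congr 1
    ext z; simp [hf, Matrix.vecMulLinear]
  rw [hfd] at hcard
  have hfin : Finite ((Fin n → ℤ) ⧸ LinearMap.range f) := by
    apply Nat.finite_of_card_ne_zero
    rw [← hcard]; simpa using hN0
  have := Fintype.ofFinite ((Fin n → ℤ) ⧸ LinearMap.range f)
  have hu : IsUnit M.det := isUnit_iff_ne_zero.2 hdet
  let ψ : (Fin n → ℤ) → (Fin n → ℝ) := fun z => Matrix.vecMul (fun i => (z i : ℝ)) M⁻¹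
  let φ : ((Fin n → ℤ) ⧸ LinearMap.range f) → (Fin n → ℝ) := fun q i => Int.fract (ψ q.out i)
  have hψ : ∀ z, Matrix.vecMul (ψ z) M = fun i => (z i : ℝ) := by
    intro z
    simp only [ψ]
    rw [Matrix.vecMul_vecMul, Matrix.nonsing_inv_mul _ hu, Matrix.vecMul_one]
  have hφ : ∀ q, Matrix.vecMul (φ q) M =
      fun j => ((q.out j - Matrix.vecMul (fun i => ⌊ψ q.out i⌋) (Matrix.of N) j : ℤ) : ℝ) := by
    intro q
    have : φ q = ψ q.out - fun i => (⌊ψ q.out i⌋ : ℝ) := by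
      ext i; rfl
    rw [this, Matrix.sub_vecMul, hψ, hcast]
    ext j; simp
  refine ⟨univ.image φ, ?_, ?_, ?_⟩
  · intro lam h i
    obtain ⟨q, -, rfl⟩ := mem_image.1 h
    exact ⟨Int.fract_nonneg _, Int.fract_lt_one _⟩
  · intro lam h i
    obtain ⟨q, -, rfl⟩ := mem_image.1 h
    rw [hφ]; exact ⟨_, rfl⟩
  · rw [card_image_of_injective]
    · rw [card_univ, ← Nat.card_eq_fintype_card, ← hcard, hdN, Nat.cast_natAbs, Int.cast_abs]
    · intro q q' h
      have h1 := hφ q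
      rw [h, hφ q'] at h1
      rw [← Submodule.Quotient.mk_out q, ← Submodule.Quotient.mk_out q', Submodule.Quotient.eq]
      refine ⟨(fun i => ⌊ψ q.out i⌋) - (fun i => ⌊ψ q'.out i⌋), ?_⟩
      rw [map_sub]
      ext j
      have h2 := congrFun h1 j
      simp only [Int.cast_inj] at h2
      simp only [hf, Matrix.vecMulLinear_apply, Pi.sub_apply]
      linarith

end Sop

namespace Sop
open Filter Topology
open scoped Classical
set_option linter.unusedSectionVars false

section Geo12

variable {n : ℕ} {X : Type*} [Fintype X] [Nonempty X]

/-- systems of convex weights -/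
def IsW (θ : Fin n → X → ℝ) : Prop := (∀ i x, 0 ≤ θ i x) ∧ ∀ i, ∑ x, θ i x = 1

/-- the point represented by a system of weights -/
def mm (pt : Fin n → X → Fin n → ℝ) (θ : Fin n → X → ℝ) : Fin n → ℝ :=
  ∑ i, ∑ x, θ i x • pt i x

/-- the dual cell of a system of weights -/
def Yt (pt : Fin n → X → Fin n → ℝ) (ω : Fin n → X → ℝ) (θ : Fin n → X → ℝ) : Set (EE n) :=
  {y | ∀ i x, θ i x ≠ 0 → (arr pt ω).Act i x y}

variable {pt : Fin n → X → Fin n → ℝ} {ω : Fin n → X → ℝ}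

lemma pr_mm (θ : Fin n → X → ℝ) (u : EE n) :
    pr (mm pt θ) u = ∑ i, ∑ x, θ i x * pr (pt i x) u := by
  simp [mm, map_sum, LinearMap.sum_apply]

lemma gap_eq {θ : Fin n → X → ℝ} (hθ : IsW θ) (z : EE n) :
    ∑ i, ∑ x, θ i x * (hh pt ω i z - (arr pt ω).l i x z) =
      ∑ i, hh pt ω i z - pr (mm pt θ) z - ∑ i, ∑ x, θ i x * ω i x := by
  rw [pr_mm, ← Finset.sum_sub_distrib, ← Finset.sum_sub_distrib]
  refine Finset.sum_congr rfl fun i _ => ?_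
  have h1 : hh pt ω i z = ∑ x, θ i x * hh pt ω i z := by
    rw [← Finset.sum_mul, hθ.2 i, one_mul]
  conv_rhs => rw [h1]
  rw [← Finset.sum_sub_distrib, ← Finset.sum_sub_distrib]
  refine Finset.sum_congr rfl fun x _ => ?_
  have : (arr pt ω).l i x z = pr (pt i x) z + ω i x := rfl
  rw [this]; ring

lemma gap_nonneg {θ : Fin n → X → ℝ} (hθ : IsW θ) (z : EE n) :
    0 ≤ ∑ i, ∑ x, θ i x * (hh pt ω i z - (arr pt ω).l i x z) :=
  Finset.sum_nonneg fun i _ => Finset.sum_nonneg fun x _ =>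
    mul_nonneg (hθ.1 i x) (sub_nonneg.2 (le_hh i x z))

lemma gap_zero {θ : Fin n → X → ℝ} (hθ : IsW θ) (z : EE n) :
    ∑ i, ∑ x, θ i x * (hh pt ω i z - (arr pt ω).l i x z) = 0 ↔ z ∈ Yt pt ω θ := by
  have hnn : ∀ i x, 0 ≤ θ i x * (hh pt ω i z - (arr pt ω).l i x z) := fun i x =>
    mul_nonneg (hθ.1 i x) (sub_nonneg.2 (le_hh i x z))
  constructor
  · intro h i x hx w
    have h2 := (Finset.sum_eq_zero_iff_of_nonneg (fun i _ => Finset.sum_nonneg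
      fun x _ => hnn i x)).1 h i (mem_univ i)
    have h3 := (Finset.sum_eq_zero_iff_of_nonneg (fun x _ => hnn i x)).1 h2 x (mem_univ x)
    have h4 : hh pt ω i z - (arr pt ω).l i x z = 0 := (mul_eq_zero.1 h3).resolve_left hx
    linarith [le_hh (pt := pt) (ω := ω) i w z]
  · intro h
    refine Finset.sum_eq_zero fun i _ => Finset.sum_eq_zero fun x _ => ?_
    by_cases hx : θ i x = 0
    · rw [hx, zero_mul]
    · rw [hh_eq (h i x hx), sub_self, mul_zero]

lemma mm_inj (hgen : ∀ y, Gen (arr pt ω) ⊤ univ y) {θ θ' : Fin n → X → ℝ} (hθ : IsW θ)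
    (hθ' : IsW θ') (hY : (Yt pt ω θ).Nonempty) (hY' : (Yt pt ω θ').Nonempty)
    (hm : mm pt θ = mm pt θ') : θ = θ' := by
  obtain ⟨y, hy⟩ := hY
  obtain ⟨y', hy'⟩ := hY'
  have a1 := (gap_zero hθ y).2 hy
  have a2 := (gap_zero hθ' y').2 hy'
  have b1 := gap_nonneg (pt := pt) (ω := ω) hθ' y
  have b2 := gap_nonneg (pt := pt) (ω := ω) hθ y'
  have hy2 : y ∈ Yt pt ω θ' := by
    rw [← gap_zero hθ']
    rw [gap_eq hθ] at a1 b2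
    rw [gap_eq hθ'] at a2 b1 ⊢
    rw [← hm] at a2 b1 ⊢
    linarith
  have hg := hgen y (θ - θ') (fun i => by
      simp [Finset.sum_sub_distrib, hθ.2, hθ'.2]) (fun i x h => by
      refine ⟨mem_univ _, ?_⟩
      by_cases h0 : θ i x = 0
      · apply hy2; intro h1; apply h; simp [h0, h1]
      · exact hy i x h0) (fun u _ => by
      have : ∀ i x, (θ - θ') i x * (arr pt ω).a i x u =
          θ i x * pr (pt i x) u - θ' i x * pr (pt i x) u := fun i x => sub_mul _ _ _
      simp only [this, Finset.sum_sub_distrib]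
      rw [← pr_mm, ← pr_mm, hm, sub_self])
  exact sub_eq_zero.1 hg

lemma mm_interior (hP : (interior (MS pt (fun _ => Set.univ) univ)).Nonempty)
    {θ : Fin n → X → ℝ} (hθ : IsW θ) (hY : (Yt pt ω θ).Nonempty)
    (hb : Bornology.IsBounded (Yt pt ω θ)) :
    mm pt θ ∈ interior (MS pt (fun _ => Set.univ) univ) := by
  by_contra hni
  have hc := MS.conv (pt := pt) (fun _ => Set.univ) univ
  obtain ⟨φ, hφ⟩ := geometric_hahn_banach_open_point hc.interior isOpen_interior hni
  obtain ⟨u, hu⟩ := pr_repr (φ : (Fin n → ℝ) →ₗ[ℝ] ℝ)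
  have hu' : ∀ m, φ m = pr m u := hu
  have hu0 : u ≠ 0 := by
    rintro rfl
    obtain ⟨a, ha⟩ := hP
    have := hφ a ha
    simp [hu'] at this
  have hle : ∀ a ∈ MS pt (fun _ => Set.univ) univ, pr a u ≤ pr (mm pt θ) u := by
    intro a ha
    have h1 : a ∈ closure (interior (MS pt (fun _ => Set.univ) univ)) := by
      rw [hc.closure_interior_eq_closure_of_nonempty_interior hP]
      exact subset_closure ha
    have h2 : closure (interior (MS pt (fun _ => Set.univ) univ)) ⊆ {a | φ a ≤ φ (mm pt θ)} :=
      closure_minimal (fun a ha => (hφ a ha).le) (isClosed_le φ.continuous continuous_const)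
    have h3 : φ a ≤ φ (mm pt θ) := h2 h1
    rwa [hu', hu'] at h3
  choose w hw using fun i => Finite.exists_max (fun x => pr (pt i x) u)
  have h1 := hle (∑ i, pt i (w i)) (MS.mem_sum fun i _ =>
    subset_convexHull ℝ _ ⟨w i, Set.mem_univ _, rfl⟩)
  have hnn : ∀ i x, 0 ≤ θ i x * (pr (pt i (w i)) u - pr (pt i x) u) := fun i x =>
    mul_nonneg (hθ.1 i x) (sub_nonneg.2 (hw i x))
  have h2 : ∑ i, ∑ x, θ i x * (pr (pt i (w i)) u - pr (pt i x) u) = 0 := by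
    apply le_antisymm _ (Finset.sum_nonneg fun i _ => Finset.sum_nonneg fun x _ => hnn i x)
    simp only [mul_sub, Finset.sum_sub_distrib]
    have h9 : ∑ i, ∑ x, θ i x * pr (pt i (w i)) u = ∑ i, pr (pt i (w i)) u :=
      Finset.sum_congr rfl fun i _ => by rw [← Finset.sum_mul, hθ.2, one_mul]
    rw [h9, ← pr_mm]
    rw [map_sum, LinearMap.sum_apply] at h1
    linarith
  have h5 : ∀ i x, θ i x ≠ 0 → ∀ x', pr (pt i x') u ≤ pr (pt i x) u := by
    intro i x hx x'
    have h2 := (Finset.sum_eq_zero_iff_of_nonneg (fun i _ => Finset.sum_nonneg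
      fun x _ => hnn i x)).1 h2 i (mem_univ i)
    have h3 := (Finset.sum_eq_zero_iff_of_nonneg (fun x _ => hnn i x)).1 h2 x (mem_univ x)
    have h4 := (mul_eq_zero.1 h3).resolve_left hx
    linarith [hw i x']
  obtain ⟨y, hy⟩ := hY
  have hray : ∀ t : ℝ, 0 ≤ t → y + t • u ∈ Yt pt ω θ := by
    intro t ht i x hx x'
    rw [Arr.l_add_smul, Arr.l_add_smul]
    have e1 := hy i x hx x'
    have e2 : (arr pt ω).a i x' u ≤ (arr pt ω).a i x u := h5 i x hx x'
    nlinarith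
  obtain ⟨R, hR⟩ := hb.exists_norm_le
  have hpos : 0 < ‖u‖ := norm_pos_iff.2 hu0
  have hR0 : 0 ≤ R := (norm_nonneg _).trans (hR y hy)
  have h6 := hR _ (hray ((2 * R + 1) / ‖u‖) (by positivity))
  have h7 : ‖((2 * R + 1) / ‖u‖) • u‖ = 2 * R + 1 := by
    rw [norm_smul, Real.norm_of_nonneg (by positivity)]
    field_simp
  have h8 := norm_sub_le (y + ((2 * R + 1) / ‖u‖) • u) y
  rw [add_sub_cancel_left, h7] at h8
  linarith [hR y hy]

end Geo12
end Sop

namespace Sop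
open Filter Topology
open scoped Classical
set_option linter.unusedSectionVars false

section Geo13

variable {n : ℕ} {X : Type*} [Fintype X] [Nonempty X]

/-- the system of weights of a key `(s, lam)` and a choice `v` -/
noncomputable def th (s : Fin n → Finset X) (lam : Fin n → ℝ) (v : Fin n → X) (i : Fin n) (x : X) :
    ℝ :=
  if lam i ≠ 0 then (if x = FF (s i) then lam i else 0) + (if x = GG (s i) then 1 - lam i else 0)
  else if x = v i then 1 else 0

/-- valid keys -/
def VK (s : Fin n → Finset X) (lam : Fin n → ℝ) : Prop :=
  ∀ i, (0 ≤ lam i ∧ lam i < 1) ∧ (lam i ≠ 0 → FF (s i) ≠ GG (s i) ∧ s i = {FF (s i), GG (s i)}) ∧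
    (lam i = 0 → s i = ∅)

noncomputable def KK (lam : Fin n → ℝ) : Finset (Fin n) := univ.filter fun i => lam i ≠ 0

variable {pt : Fin n → X → Fin n → ℝ} {ω : Fin n → X → ℝ}
variable {s s' : Fin n → Finset X} {lam lam' : Fin n → ℝ} {v v' : Fin n → X}

lemma th_W (h : VK s lam) : IsW (th s lam v) := by
  constructor
  · intro i x
    have := (h i).1
    unfold th
    split_ifs <;> linarith
  · intro i
    unfold th
    by_cases hi : lam i = 0
    · simp [hi]
    · simp [hi, Finset.sum_add_distrib]

lemma th_ne (h : VK s lam) (i : Fin n) (x : X) : th s lam v i x ≠ 0 ↔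
    if lam i ≠ 0 then x = FF (s i) ∨ x = GG (s i) else x = v i := by
  have h1 := (h i).1
  by_cases hi : lam i = 0
  · simp [th, hi]
  · have h2 := ((h i).2.1 hi).1
    have h3 : 1 - lam i ≠ 0 := by linarith
    simp only [th, hi, ne_eq, not_false_eq_true, if_true]
    by_cases hx : x = FF (s i)
    · subst hx; simp [h2, hi]
    · by_cases hx' : x = GG (s i)
      · simp [hx', h2.symm, h3]
      · simp [hx, hx']

lemma th_Yt (h : VK s lam) : Yt pt ω (th s lam v) =
    Reg (arr pt ω) (KK lam)ᶜ (Tie (arr pt ω) (KK lam) (fun i => FF (s i)) (fun i => GG (s i))) v := by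
  ext y
  simp only [Yt, Reg, Tie, Set.mem_ofPred_eq, th_ne h, KK, mem_compl, mem_filter, mem_univ,
    true_and, not_not]
  constructor
  · intro H
    exact ⟨fun k hk => ⟨H k _ (by simp [hk]), H k _ (by simp [hk])⟩,
      fun i hi => H i _ (by simp [hi])⟩
  · rintro ⟨H1, H2⟩ i x hx
    by_cases hi : lam i = 0
    · simp only [hi, ne_eq, not_true_eq_false, if_false] at hx
      rw [hx]; exact H2 i hi
    · simp only [hi, ne_eq, not_false_eq_true, if_true] at hx
      rcases hx with rfl | rfl
      · exact (H1 i hi).1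
      · exact (H1 i hi).2

lemma th_inj (h : VK s lam) (h' : VK s' lam') (hv : ∀ k ∈ KK lam, v k = FF (s k))
    (hv' : ∀ k ∈ KK lam', v' k = FF (s' k)) (he : th s lam v = th s' lam' v') :
    s = s' ∧ lam = lam' ∧ v = v' := by
  have hK : ∀ {s s' : Fin n → Finset X} {lam lam' : Fin n → ℝ} {v v' : Fin n → X}
      (h : VK s lam) (he : th s lam v = th s' lam' v') i, lam i ≠ 0 → lam' i ≠ 0 := by
    intro s s' lam lam' v v' h he i hi hi'
    have e := congrFun (congrFun he i) (FF (s i))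
    have h1 := (h i).1
    have h2 := ((h i).2.1 hi).1
    simp only [th, hi, hi', ne_eq, not_false_eq_true, if_true, not_true_eq_false, if_false, h2,
      add_zero] at e
    split_ifs at e
    · linarith
    · exact hi e
  have key : ∀ i, s i = s' i ∧ lam i = lam' i ∧ v i = v' i := by
    intro i
    by_cases hi : lam i = 0
    · have hi' : lam' i = 0 := by
        by_contra hc
        exact hK h' he.symm i hc hi
      refine ⟨by rw [(h i).2.2 hi, (h' i).2.2 hi'], by rw [hi, hi'], ?_⟩
      have := (th_ne (v := v') h' i (v i)).1 (by rw [← he, th_ne h]; simp [hi])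
      simpa [hi'] using this
    · have hi' := hK h he i hi
      have hs : s i = s' i := by
        rw [((h i).2.1 hi).2, ((h' i).2.1 hi').2]
        ext x
        have e1 := th_ne (v := v) h i x
        have e2 := th_ne (v := v') h' i x
        rw [he] at e1
        simp only [hi, hi', ne_eq, not_false_eq_true, if_true] at e1 e2
        simp only [mem_insert, mem_singleton]
        rw [← e1, ← e2]
      refine ⟨hs, ?_, ?_⟩
      · have e := congrFun (congrFun he i) (FF (s i))
        have h2 := ((h i).2.1 hi).1
        simpa [th, hi, hi', h2, ← hs] using e
      · rw [hv i (by simp [KK, hi]), hv' i (by simp [KK, hi']), hs]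
  exact ⟨funext fun i => (key i).1, funext fun i => (key i).2.1, funext fun i => (key i).2.2⟩

lemma isLatticePt_add {x y : Fin n → ℝ} (hx : IsLatticePt x) (hy : IsLatticePt y) :
    IsLatticePt (x + y) := by
  intro i
  obtain ⟨a, ha⟩ := hx i
  obtain ⟨b, hb⟩ := hy i
  exact ⟨a + b, by simp [ha, hb]⟩

lemma isLatticePt_sum {ι : Type*} {I : Finset ι} {x : ι → Fin n → ℝ}
    (hx : ∀ i ∈ I, IsLatticePt (x i)) :
    IsLatticePt (∑ i ∈ I, x i) := by
  induction I using Finset.induction_on with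
  | empty => intro i; exact ⟨0, by simp⟩
  | insert i I hi ih =>
    rw [Finset.sum_insert hi]
    exact isLatticePt_add (hx i (by simp)) (ih fun j hj => hx j (by simp [hj]))

lemma th_mm (hpt : ∀ i x, IsLatticePt (pt i x)) {s0 : Fin n → Finset X}
    (hs : ∀ i, lam i ≠ 0 → s i = s0 i) (hl : IsLatticePt (Matrix.vecMul lam (em pt s0))) :
    IsLatticePt (mm pt (th s lam v)) := by
  have : mm pt (th s lam v) = Matrix.vecMul lam (em pt s0) +
      ∑ i, (if lam i ≠ 0 then pt i (GG (s i)) else pt i (v i)) := by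
    have e1 : Matrix.vecMul lam (em pt s0) =
        ∑ i, lam i • (pt i (FF (s0 i)) - pt i (GG (s0 i))) := by
      ext j
      simp [Matrix.vecMul, dotProduct, em]
    rw [e1, ← Finset.sum_add_distrib]
    unfold mm
    refine Finset.sum_congr rfl fun i _ => ?_
    by_cases hi : lam i = 0
    · simp [th, hi]
    · simp only [th, hi, ne_eq, not_false_eq_true, if_true, add_smul, Finset.sum_add_distrib,
        ite_smul, zero_smul, Finset.sum_ite_eq', mem_univ, hs i hi]
      module
  rw [this]
  refine isLatticePt_add hl (isLatticePt_sum fun i _ => ?_)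
  split_ifs <;> exact hpt _ _

lemma lattice_finite {A : Set (Fin n → ℝ)} (hA : Bornology.IsBounded A) : (intLat A).Finite := by
  obtain ⟨R, hR⟩ := hA.exists_norm_le
  apply Set.Finite.subset ((Set.Finite.pi' (t := fun _ : Fin n => Set.Icc (-⌈R⌉) ⌈R⌉)
    fun _ => Set.finite_Icc _ _).image fun z i => (z i : ℝ))
  rintro x ⟨hx, hl⟩
  choose z hz using hl
  refine ⟨z, fun i => ?_, funext fun i => (hz i).symm⟩
  have h1 : |x i| ≤ R := (norm_le_pi_norm x i).trans (hR x (interior_subset hx))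
  have h2 : |x i| ≤ (⌈R⌉ : ℝ) := h1.trans (Int.le_ceil R)
  rw [hz, ← Int.cast_abs, Int.cast_le, abs_le] at h2
  exact h2

end Geo13
end Sop

namespace Sop
open Filter Topology
open scoped Classical
set_option linter.unusedSectionVars false

section Geo14

variable {n : ℕ} {X : Type*} [Fintype X] [Nonempty X]
variable {pt : Fin n → X → Fin n → ℝ} {ω : Fin n → X → ℝ}

noncomputable def ky (pt : Fin n → X → Fin n → ℝ) (ω : Fin n → X → ℝ)
    (q : Σ _ : EE n, Fin n → ℝ) : (Fin n → Finset X) × (Fin n → ℝ) :=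
  (fun i => if q.2 i ≠ 0 then acF pt ω q.1 i else ∅, q.2)

noncomputable def BD (pt : Fin n → X → Fin n → ℝ) (ω : Fin n → X → ℝ)
    (k : (Fin n → Finset X) × (Fin n → ℝ)) : Finset (Fin n → X) :=
  univ.filter fun v : Fin n → X => (∀ i ∈ KK k.2, v i = FF (k.1 i)) ∧
      (Reg (arr pt ω) (KK k.2)ᶜ (Tie (arr pt ω) (KK k.2) (fun i => FF (k.1 i))
        (fun i => GG (k.1 i))) v).Nonempty ∧
      Bornology.IsBounded (Reg (arr pt ω) (KK k.2)ᶜ (Tie (arr pt ω) (KK k.2)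
        (fun i => FF (k.1 i)) (fun i => GG (k.1 i))) v)

lemma ky_VK (hgen : ∀ y, Gen (arr pt ω) ⊤ univ y) {q : Σ _ : EE n, Fin n → ℝ}
    (hp : q.1 ∈ Pt (arr pt ω) univ Set.univ) (hq : ∀ i, 0 ≤ q.2 i ∧ q.2 i < 1) :
    VK (ky pt ω q).1 (ky pt ω q).2 := by
  intro i
  refine ⟨hq i, fun hi => ?_, fun hi => ?_⟩
  · have hi' : q.2 i ≠ 0 := hi
    simp only [ky, hi', ne_eq, not_false_eq_true, if_true]
    exact ⟨(FG_act hp i).1, acF_eq hgen hp i⟩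
  · have hi' : q.2 i = 0 := hi
    simp [ky, hi']

lemma count_pairs (hpt : ∀ i x, IsLatticePt (pt i x))
    (hgen : ∀ y, Gen (arr pt ω) ⊤ univ y) (hco : Coer (arr pt ω) ⊤ univ)
    (hP : (interior (MS pt (fun _ => Set.univ) univ)).Nonempty) {S : Finset (EE n)}
    (hS : ∀ p, p ∈ S ↔ p ∈ Pt (arr pt ω) univ Set.univ) {Λ : EE n → Finset (Fin n → ℝ)}
    (h1 : ∀ p ∈ S, ∀ lam ∈ Λ p, ∀ i, 0 ≤ lam i ∧ lam i < 1)
    (h2 : ∀ p ∈ S, ∀ lam ∈ Λ p, IsLatticePt (Matrix.vecMul lam (em pt (acF pt ω p)))) :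
    ∑ p ∈ S, (Λ p).card ≤ (intLat (MS pt (fun _ => Set.univ) univ)).ncard + 1 := by
  rw [← Finset.card_sigma]
  set Q := S.sigma Λ with hQ
  have hVK : ∀ q ∈ Q, VK (ky pt ω q).1 (ky pt ω q).2 := by
    intro q hq
    rw [hQ, mem_sigma] at hq
    exact ky_VK hgen ((hS _).1 hq.1) (h1 _ hq.1 _ hq.2)
  have hfib : ∀ k ∈ Q.image (ky pt ω), (Q.filter fun q => ky pt ω q = k).card ≤
      (BD pt ω k).card + if KK k.2 = ∅ then 1 else 0 := by
    intro k hk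
    obtain ⟨q0, hq0, rfl⟩ := mem_image.1 hk
    have hV := hVK q0 hq0
    set k := ky pt ω q0
    have hfg : ∀ i ∈ KK k.2, FF (k.1 i) ≠ GG (k.1 i) := by
      intro i hi
      exact ((hV i).2.1 (mem_filter.1 hi).2).1
    have hct := count (by simp) hgen hco (KK k.2) hfg
      (S := S.filter fun p => p ∈ Pt (arr pt ω) (KK k.2)ᶜ (Tie (arr pt ω) (KK k.2)
        (fun i => FF (k.1 i)) (fun i => GG (k.1 i)))) (by
        intro p
        rw [mem_filter]
        constructor
        · intro h
          convert h.2
        · intro h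
          exact ⟨(hS p).2 (pt_tie hfg h), by convert h⟩)
    refine le_trans (b := (S.filter fun p => p ∈ Pt (arr pt ω) (KK k.2)ᶜ (Tie (arr pt ω) (KK k.2)
        (fun i => FF (k.1 i)) (fun i => GG (k.1 i)))).card) ?_ ?_
    · apply Finset.card_le_card_of_injOn (fun q => q.1)
      · intro q hq
        obtain ⟨hqQ, hqk⟩ := mem_filter.1 (mem_coe.1 hq)
        have hqS := (mem_sigma.1 hqQ).1
        have hp := (hS _).1 hqS
        rw [mem_coe, mem_filter]
        refine ⟨hqS, ⟨?_, fun i _ => hp.2 i (mem_univ i)⟩⟩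
        intro i hi
        rw [← hqk] at hi ⊢
        have hi' : q.2 i ≠ 0 := (mem_filter.1 hi).2
        simp only [ky, hi', ne_eq, not_false_eq_true, if_true]
        exact (FG_act hp i).2
      · intro q hq q' hq' he
        obtain ⟨hqQ, hqk⟩ := mem_filter.1 (mem_coe.1 hq)
        obtain ⟨hqQ', hqk'⟩ := mem_filter.1 (mem_coe.1 hq')
        have e2 : q.2 = q'.2 := by
          have := congrArg Prod.snd (hqk.trans hqk'.symm)
          exact this
        obtain ⟨p, l⟩ := q
        obtain ⟨p', l'⟩ := q'
        simp only at he e2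
        rw [he, e2]
    · refine hct.trans (le_of_eq ?_)
      unfold BD
      congr!
  rw [Finset.card_eq_sum_card_image (ky pt ω) Q]
  refine (Finset.sum_le_sum hfib).trans ?_
  rw [Finset.sum_add_distrib]
  apply add_le_add
  · rw [← Finset.card_sigma, Set.ncard_eq_toFinset_card _
      (lattice_finite (MS.compact (pt := pt) (fun _ => Set.univ) univ).isBounded)]
    have hB : ∀ z ∈ (Q.image (ky pt ω)).sigma (BD pt ω), VK z.1.1 z.1.2 ∧
        (∀ i ∈ KK z.1.2, z.2 i = FF (z.1.1 i)) ∧ (Yt pt ω (th z.1.1 z.1.2 z.2)).Nonempty ∧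
        Bornology.IsBounded (Yt pt ω (th z.1.1 z.1.2 z.2)) := by
      intro z hz
      rw [mem_sigma] at hz
      obtain ⟨q, hq, hqz⟩ := mem_image.1 hz.1
      have hV := hVK q hq
      rw [hqz] at hV
      refine ⟨hV, ?_⟩
      rw [th_Yt hV]
      exact (mem_filter.1 hz.2).2
    apply Finset.card_le_card_of_injOn (fun z => mm pt (th z.1.1 z.1.2 z.2))
    · intro z hz
      obtain ⟨b1, b2, b3, b4⟩ := hB z (mem_coe.1 hz)
      rw [mem_coe, Set.Finite.mem_toFinset]
      refine ⟨mm_interior hP (th_W b1) b3 b4, ?_⟩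
      obtain ⟨q, hq, hqz⟩ := mem_image.1 (mem_sigma.1 (mem_coe.1 hz)).1
      have hqS := mem_sigma.1 hq
      show IsLatticePt (mm pt (th z.1.1 z.1.2 z.2))
      rw [← hqz]
      refine th_mm hpt (s0 := acF pt ω q.1) (fun i hi => ?_) (h2 _ hqS.1 _ hqS.2)
      have hi' : q.2 i ≠ 0 := hi
      simp [ky, hi']
    · intro z hz z' hz' he
      obtain ⟨b1, b2, b3, b4⟩ := hB z (mem_coe.1 hz)
      obtain ⟨c1, c2, c3, c4⟩ := hB z' (mem_coe.1 hz')
      obtain ⟨d1, d2, d3⟩ := th_inj b1 c1 b2 c2 (mm_inj hgen (th_W b1) (th_W c1) b3 c3 he)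
      obtain ⟨⟨s, l⟩, v⟩ := z
      obtain ⟨⟨s', l'⟩, v'⟩ := z'
      simp only at d1 d2 d3
      rw [d1, d2, d3]
  · rw [← Finset.card_filter, Finset.card_le_one]
    have : ∀ k ∈ (Q.image (ky pt ω)).filter (fun k => KK k.2 = ∅), k = (fun _ => ∅, 0) := by
      intro k hk
      obtain ⟨hk, hK⟩ := mem_filter.1 hk
      obtain ⟨q, hq, hqz⟩ := mem_image.1 hk
      have hV := hVK q hq
      rw [hqz] at hV
      have h0 : ∀ i, k.2 i = 0 := by
        intro i
        by_contra hi
        have : i ∈ KK k.2 := by simp [KK, hi]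
        rw [hK] at this
        simp at this
      exact Prod.ext (funext fun i => (hV i).2.2 (h0 i)) (funext h0)
    intro a ha b hb
    rw [this a ha, this b hb]

theorem main_pt (hpt : ∀ i x, IsLatticePt (pt i x))
    (hco : ∀ i, ∀ u : EE n, u ≠ 0 → ∃ x x', pr (pt i x) u ≠ pr (pt i x') u)
    (hP : (interior (MS pt (fun _ => Set.univ) univ)).Nonempty) :
    ∑ I : Finset (Fin n), (-1 : ℝ) ^ (n - I.card) *
      (volume (MS pt (fun _ => Set.univ) I)).toReal - 1 ≤
        ((intLat (MS pt (fun _ => Set.univ) univ)).ncard : ℝ) := by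
  obtain ⟨ω, hgen⟩ := exists_gen pt
  have hT : Tie (arr pt ω) ∅ (fun _ => Classical.arbitrary X) (fun _ => Classical.arbitrary X) =
      Set.univ := by ext y; simp [Tie]
  have hfin : (Pt (arr pt ω) univ Set.univ).Finite := by
    have := (Tie.good (by simp) hgen (K := ∅) (f := fun _ => Classical.arbitrary X)
      (g := fun _ => Classical.arbitrary X) (by simp) (by rw [hT]; exact Set.univ_nonempty)).finite
    simpa [hT] using this
  have hS : ∀ p, p ∈ hfin.toFinset ↔ p ∈ Pt (arr pt ω) univ Set.univ := fun p => by simp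
  rw [mv_formula hgen hS]
  have hM : ∀ p i, IsLatticePt (em pt (acF pt ω p) i) := by
    intro p i j
    obtain ⟨a, ha⟩ := hpt i (FF (acF pt ω p i)) j
    obtain ⟨b, hb⟩ := hpt i (GG (acF pt ω p i)) j
    exact ⟨a - b, by simp [em, ha, hb]⟩
  choose Λ a1 a2 a3 using fun p => lattice_box _ (hM p)
  have := count_pairs hpt hgen (fun i _ u _ hu => hco i u hu) hP hS (Λ := Λ)
    (fun p _ => a1 p) (fun p _ => a2 p)
  have h4 : ∑ p ∈ hfin.toFinset, |(em pt (acF pt ω p)).det| ≤ ∑ p ∈ hfin.toFinset, ((Λ p).card : ℝ) :=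
    Finset.sum_le_sum fun p _ => a3 p
  have h5 : ((∑ p ∈ hfin.toFinset, (Λ p).card : ℕ) : ℝ) ≤
    (((intLat (MS pt (fun _ => Set.univ) univ)).ncard + 1 : ℕ) : ℝ) := by exact_mod_cast this
  push_cast at h5
  linarith

end Geo14
end Sop

theorem soprunov_lower_bound {n : ℕ}
    (P : Fin n → Set (Fin n → ℝ)) (hP : ∀ i, IsLatticePolytope (P i))
    (hdim : ∀ i, adim (P i) = n) :
    mixedVol P - 1 ≤ ((intLat (∑ i, P i)).ncard : ℝ) := by
  classical
  choose V hV hVl hPV using hP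
  let X := {x // x ∈ insert (0 : Fin n → ℝ) (univ.biUnion V)}
  have : Nonempty X := ⟨⟨0, by simp⟩⟩
  let pt : Fin n → X → Fin n → ℝ := fun i x => if x.1 ∈ V i then x.1 else (hV i).choose
  have : Fintype X := Finset.Subtype.fintype _
  have hmem : ∀ i x, pt i x ∈ V i := by
    intro i x
    simp only [pt]
    split_ifs with h
    · exact h
    · exact (hV i).choose_spec
  have hr : ∀ i, pt i '' Set.univ = V i := by
    intro i
    rw [Set.image_univ]
    ext x
    constructor
    · rintro ⟨w, rfl⟩; exact hmem i w
    · intro hx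
      have hx : x ∈ V i := hx
      refine ⟨⟨x, by
        rw [mem_insert, mem_biUnion]; exact Or.inr ⟨i, mem_univ i, hx⟩⟩, ?_⟩
      simp [pt, hx]
  have hMS : ∀ I, Sop.MS pt (fun _ => Set.univ) I = ∑ i ∈ I, P i := by
    intro I
    unfold Sop.MS
    refine Finset.sum_congr rfl fun i _ => ?_
    rw [hr, hPV]
  have htop : ∀ i, affineSpan ℝ (P i) = ⊤ := by
    intro i
    have hne : (affineSpan ℝ (P i) : Set (Fin n → ℝ)).Nonempty := by
      rw [affineSpan_nonempty, hPV, convexHull_nonempty_iff]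
      exact hV i
    rw [← AffineSubspace.direction_eq_top_iff_of_nonempty hne]
    apply Submodule.eq_top_of_finrank_eq
    have := hdim i
    unfold adim at this
    rw [this]; simp
  have hco : ∀ i, ∀ u : Sop.EE n, u ≠ 0 → ∃ x x', Sop.pr (pt i x) u ≠ Sop.pr (pt i x') u := by
    intro i u hu
    by_contra hc
    push Not at hc
    obtain ⟨v0, hv0⟩ := hV i
    have hx0 : ∃ x0, pt i x0 = v0 := by
      have : v0 ∈ pt i '' Set.univ := by rw [hr]; exact hv0
      obtain ⟨x, -, h⟩ := this
      exact ⟨x, h⟩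
    obtain ⟨x0, hx0⟩ := hx0
    have h1 : affineSpan ℝ (P i) ≤
        AffineSubspace.mk' v0 (LinearMap.ker (Sop.pr.flip u : (Fin n → ℝ) →ₗ[ℝ] ℝ)) := by
      rw [hPV, affineSpan_convexHull, affineSpan_le, ← hr]
      rintro _ ⟨x, -, rfl⟩
      rw [SetLike.mem_coe, AffineSubspace.mem_mk', LinearMap.mem_ker, LinearMap.flip_apply,
        vsub_eq_sub, ← hx0, map_sub, LinearMap.sub_apply, hc x x0, sub_self]
    rw [htop, top_le_iff] at h1
    have h2 := congrArg AffineSubspace.direction h1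
    rw [AffineSubspace.direction_mk', AffineSubspace.direction_top] at h2
    exact Sop.pr_flip_ne hu (LinearMap.ker_eq_top.1 h2)
  have hInter : (interior (Sop.MS pt (fun _ => Set.univ) univ)).Nonempty := by
    rw [hMS]
    rcases isEmpty_or_nonempty (Fin n) with hE | ⟨⟨i0⟩⟩
    · have : (∑ i, P i) = Set.univ := by
        apply Set.eq_univ_of_forall
        intro x
        rw [Finset.univ_eq_empty, Finset.sum_empty, Set.mem_zero]
        exact Subsingleton.elim _ _
      rw [this, interior_univ]
      exact Set.univ_nonempty
    · rw [← Finset.add_sum_erase univ P (mem_univ i0)]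
      have h1 : (interior (P i0)).Nonempty := by
        have h := htop i0
        rw [hPV, affineSpan_convexHull] at h
        rw [hPV, interior_convexHull_nonempty_iff_affineSpan_eq_top]
        exact h
      have h2 : (∑ i ∈ univ.erase i0, P i).Nonempty := by
        choose w hw using fun i => hV i
        refine ⟨∑ i ∈ univ.erase i0, w i, Set.finsetSum_mem_finsetSum _ _ _ fun i _ => ?_⟩
        rw [hPV]
        exact subset_convexHull ℝ _ (hw i)
      exact (h1.add h2).mono subset_interior_add_left
  have := Sop.main_pt (pt := pt) (fun i x => hVl i _ (hmem i x)) hco hInter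
  simp only [hMS] at this
  exact this
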